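/- arXiv:1105.1798 — 2 statements merged into one kernel-verified Lean document; each statement's English description precedes it below -/
import Mathlib

section
/- Let α > −1, let M : [0,1] → ℝ be twice continuously differentiable with M(r) > 0 for all r ∈ [0,1] and M(1) = 1, and set μ(z) = M(|z|)(1−|z|²)^α on the open unit disc 𝔻. Let P denote the orthogonal projection of the Hilbert space L²(𝔻, μ dA) onto the closure in L²(𝔻, μ dA) of the set of (restrictions to 𝔻 of) complex polynomials. Then for every 1 < p < ∞ there is a constant C > 0 such that for every f ∈ L²(𝔻, μ dA) with ∫_𝔻 |f|^p μ dA < ∞, one has ∫_𝔻 |P f|^p μ dA ≤ C ∫_𝔻 |f|^p μ dA. -/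
/-!
The weight `μ(z) = φ(|z|)` with `φ(r) = M(r) (1 - r²)^α` is radial, so the monomials are orthogonal
in `L²(μ dA)` and `P` is the integral operator with kernel `k(z w̄)`, where `k(x) = ∑ xⁿ / γₙ` and
`γₙ = ∫ |z|²ⁿ μ dA` (`proj_eq_integral`). It suffices to bound `|k(z w̄)|` by kernels of positive
operators that are bounded on `L^p`.

Taylor's formula gives `M(r) = 1 - b (1 - r²) + O((1 - r²)²)` (`exists_expansion`). The moments
`mom α n` of the standard weight `(1 - r²)^α` satisfy `aₙ(2 + α) * mom α n = mom α 0`, where `aₙ(s)`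
are the Taylor coefficients of `(1 - x)⁻ˢ`. Hence
`1 / γₙ = (aₙ(2 + α) + b aₙ(1 + α)) / mom α 0 + eₙ` with `|eₙ| mom α n = O(n⁻²)`
(`GoodWeight.err_le`), and therefore
`|k(z w̄)| ≤ C |1 - z w̄|^(-(2 + α)) + ∑ |eₙ| |z|ⁿ |w|ⁿ` (`GoodWeight.enorm_ker_le`).

The first kernel is handled by the Schur test with a test function `(1 - |z|²)^(-ε)`
(`stdKer_bounded`). The integral it requires is the Forelli–Rudin estimate (`forelli_rudin`), which
follows from Parseval's identity applied to the power series of `(1 - z̄ w)^(-(2 + α)/2)` and a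
comparison of coefficients. The second kernel is handled by the Schur test with the constant
function `1`, because `∑ |eₙ| mom α n` converges (`errKer_bounded`).
-/

open MeasureTheory
open scoped ENNReal NNReal

namespace BergmanProj

/-! ### Binomial coefficients -/

/-- The Taylor coefficients of `(1 - x)⁻ˢ`. -/
noncomputable def binCoef (s : ℝ) (n : ℕ) : ℝ := ∏ k ∈ Finset.range n, (s + k) / (k + 1)

lemma binCoef_zero (s : ℝ) : binCoef s 0 = 1 := by simp [binCoef]

lemma binCoef_succ (s : ℝ) (n : ℕ) :
    binCoef s (n + 1) = binCoef s n * ((s + n) / (n + 1)) := by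
  rw [binCoef, Finset.prod_range_succ, ← binCoef]

lemma binCoef_pos {s : ℝ} (hs : 0 < s) (n : ℕ) : 0 < binCoef s n :=
  Finset.prod_pos fun k _ => by positivity

lemma binCoef_eq_choose (s : ℝ) (n : ℕ) :
    ((binCoef s n : ℝ) : ℂ) = Ring.choose ((s : ℂ) + n - 1) n := by
  rw [← Ring.multichoose_eq]
  have h := Ring.factorial_nsmul_multichoose_eq_ascPochhammer (s : ℂ) n
  rw [Polynomial.ascPochhammer_smeval_eq_eval, nsmul_eq_mul] at h
  have hf : ((n.factorial : ℕ) : ℂ) ≠ 0 := by exact_mod_cast n.factorial_ne_zero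
  apply mul_left_cancel₀ hf
  rw [h]
  clear h hf
  induction n with
  | zero => simp [binCoef]
  | succ n ih =>
    rw [ascPochhammer_succ_eval, ← ih, binCoef_succ, Nat.factorial_succ]
    have : ((n : ℂ) + 1) ≠ 0 := by exact_mod_cast n.succ_ne_zero
    push_cast
    field_simp

lemma hasSum_binCoef (s : ℝ) {x : ℂ} (hx : ‖x‖ < 1) :
    HasSum (fun n => (binCoef s n : ℂ) * x ^ n) (1 / (1 - x) ^ (s : ℂ)) := by
  have h := (Complex.one_div_one_sub_cpow_hasFPowerSeriesOnBall_zero (s : ℂ)).hasSum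
    (y := x) (by simpa [enorm_eq_nnnorm, ← NNReal.coe_lt_coe] using hx)
  simpa [FormalMultilinearSeries.ofScalars_apply_eq, ← binCoef_eq_choose, mul_comm] using h

lemma hasSum_binCoef_real (s : ℝ) {x : ℝ} (h0 : 0 ≤ x) (hx : x < 1) :
    HasSum (fun n => binCoef s n * x ^ n) ((1 - x) ^ (-s)) := by
  have h := hasSum_binCoef s (x := (x : ℂ)) (by simpa [abs_of_nonneg h0] using hx)
  have h2 : (1 / (1 - (x : ℂ)) ^ (s : ℂ)) = (((1 - x) ^ (-s) : ℝ) : ℂ) := by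
    rw [Real.rpow_neg (by linarith), Complex.ofReal_inv, Complex.ofReal_cpow (by linarith)]
    simp
  rw [h2] at h
  rw [← Complex.hasSum_ofReal]
  simpa using h

/-- Products `∏ (1 + uₖ)` with `uₖ` summable are bounded. -/
lemma le_exp_tsum_of_succ_le {d u : ℕ → ℝ} (hd : ∀ n, 0 ≤ d n) (hu : ∀ n, 0 ≤ u n)
    (hs : Summable u) (h : ∀ n, d (n + 1) ≤ d n * (1 + u n)) (n : ℕ) :
    d n ≤ d 0 * Real.exp (∑' k, u k) := by
  have h1 : d n ≤ d 0 * Real.exp (∑ k ∈ Finset.range n, u k) := by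
    induction n with
    | zero => simp
    | succ n ih =>
      rw [Finset.sum_range_succ, Real.exp_add, ← mul_assoc]
      refine (h n).trans ?_
      have := Real.add_one_le_exp (u n)
      refine mul_le_mul ih (by linarith) (by linarith [hu n]) ((hd n).trans ih)
  refine h1.trans ?_
  gcongr
  · exact hd 0
  · exact hs.sum_le_tsum _ fun k _ => hu k

/-! ### Moments of the standard weights -/

/-- The moment `∫_𝔻 |z|²ⁿ (1 - |z|²)^β dA`. -/
noncomputable def mom (β : ℝ) (n : ℕ) : ℝ :=
  ∫ z in Metric.ball (0 : ℂ) 1, ‖z‖ ^ (2 * n) * (1 - ‖z‖ ^ 2) ^ β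

lemma intervalIntegrable_aux {β : ℝ} (hβ : -1 < β) (n : ℕ) :
    IntervalIntegrable (fun r : ℝ => r ^ n * (1 - r ^ 2) ^ β) volume 0 1 := by
  have h1 : IntervalIntegrable (fun r : ℝ => (1 - r) ^ β) volume 0 1 := by
    have := (intervalIntegral.intervalIntegrable_rpow' (a := 0) (b := 1) hβ).comp_sub_left 1
    simpa using this.symm
  have h2 : ContinuousOn (fun r : ℝ => r ^ n * (1 + r) ^ β) (Set.uIcc 0 1) := by
    rw [Set.uIcc_of_le zero_le_one]
    refine (continuous_pow n).continuousOn.mul (ContinuousOn.rpow_const (by fun_prop) ?_)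
    intro r hr
    left
    have := hr.1
    positivity
  refine (h1.continuousOn_mul h2).congr ?_
  intro r hr
  rw [Set.uIoc_of_le zero_le_one] at hr
  have := hr.1; have := hr.2
  simp only
  rw [show 1 - r ^ 2 = (1 + r) * (1 - r) by ring, Real.mul_rpow (by linarith) (by linarith)]
  ring

lemma integrableOn_mom {β : ℝ} (hβ : -1 < β) (n : ℕ) :
    IntegrableOn (fun z : ℂ => ‖z‖ ^ n * (1 - ‖z‖ ^ 2) ^ β) (Metric.ball (0 : ℂ) 1) := by
  rw [integrableOn_fun_norm_addHaar volume (f := fun r : ℝ => r ^ n * (1 - r ^ 2) ^ β)]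
  have := intervalIntegrable_aux hβ (n + 1)
  rw [intervalIntegrable_iff_integrableOn_Ioo_of_le zero_le_one] at this
  refine this.congr_fun (fun r _ => ?_) measurableSet_Ioo
  simp [Complex.finrank_real_complex]
  ring

lemma mom_eq (β : ℝ) (n : ℕ) :
    mom β n = 2 * volume.real (Metric.ball (0 : ℂ) 1) *
      ∫ r in (0 : ℝ)..1, r ^ (2 * n + 1) * (1 - r ^ 2) ^ β := by
  have h := integral_fun_norm_addHaar (volume : Measure ℂ)
    ((Set.Iio (1 : ℝ)).indicator fun r => r ^ (2 * n) * (1 - r ^ 2) ^ β)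
  have h1 : mom β n = ∫ z : ℂ, (Set.Iio (1 : ℝ)).indicator
      (fun r => r ^ (2 * n) * (1 - r ^ 2) ^ β) ‖z‖ := by
    rw [mom, ← integral_indicator measurableSet_ball]
    congr 1 with z
    simp [Set.indicator]
  have h2 : ∫ r in Set.Ioi (0 : ℝ), r ^ (Module.finrank ℝ ℂ - 1) •
      (Set.Iio (1 : ℝ)).indicator (fun r => r ^ (2 * n) * (1 - r ^ 2) ^ β) r =
      ∫ r in (0 : ℝ)..1, r ^ (2 * n + 1) * (1 - r ^ 2) ^ β := by
    rw [intervalIntegral.integral_of_le zero_le_one, integral_Ioc_eq_integral_Ioo,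
      ← integral_indicator measurableSet_Ioo, ← integral_indicator measurableSet_Ioi]
    congr 1 with r
    by_cases h0 : 0 < r <;> by_cases h1 : r < 1 <;> simp [h0, h1, Complex.finrank_real_complex]
    ring
  rw [h1, h, h2]
  simp [Complex.finrank_real_complex]
  ring

lemma mom_pos {β : ℝ} (hβ : -1 < β) (n : ℕ) : 0 < mom β n := by
  rw [mom_eq]
  have : 0 < volume.real (Metric.ball (0 : ℂ) 1) := by
    rw [Measure.real, ENNReal.toReal_pos_iff]
    exact ⟨Metric.measure_ball_pos _ _ one_pos, measure_ball_lt_top⟩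
  refine mul_pos (by positivity) ?_
  refine intervalIntegral.intervalIntegral_pos_of_pos_on (intervalIntegrable_aux hβ _) ?_ one_pos
  intro r hr
  have h0 := hr.1
  have h1 := hr.2
  have : 0 < 1 - r ^ 2 := by nlinarith
  positivity

lemma mom_beta_succ {β : ℝ} (hβ : -1 < β) (n : ℕ) :
    mom (β + 1) n = mom β n - mom β (n + 1) := by
  rw [mom, mom, mom, ← integral_sub (integrableOn_mom hβ _) (integrableOn_mom hβ _)]
  refine setIntegral_congr_fun measurableSet_ball fun z hz => ?_
  have : ‖z‖ < 1 := by simpa using hz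
  have : 0 < 1 - ‖z‖ ^ 2 := by nlinarith [norm_nonneg z]
  rw [Real.rpow_add_one this.ne']
  ring

/-- Integration by parts, with `r ^ (2 n + 2) (1 - r²) ^ (β + 1)` as the boundary term, which
vanishes at `0` and at `1`. -/
lemma mom_parts {β : ℝ} (hβ : -1 < β) (n : ℕ) :
    (n + 1) * mom (β + 1) n = (β + 1) * mom β (n + 1) := by
  have key : ∫ r in (0 : ℝ)..1, ((2 * n + 2) * (r ^ (2 * n + 1) * (1 - r ^ 2) ^ (β + 1))
      - 2 * (β + 1) * (r ^ (2 * (n + 1) + 1) * (1 - r ^ 2) ^ β)) = 0 := by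
    have := intervalIntegral.integral_eq_sub_of_hasDerivAt_of_le zero_le_one
      (f := fun r : ℝ => r ^ (2 * n + 2) * (1 - r ^ 2) ^ (β + 1))
      (f' := fun r : ℝ => (2 * n + 2) * (r ^ (2 * n + 1) * (1 - r ^ 2) ^ (β + 1))
      - 2 * (β + 1) * (r ^ (2 * (n + 1) + 1) * (1 - r ^ 2) ^ β)) ?_ ?_ ?_
    · rw [this]
      simp [Real.zero_rpow (by linarith : β + 1 ≠ 0)]
    · refine (continuous_pow _).continuousOn.mul (ContinuousOn.rpow_const (by fun_prop) ?_)
      intro r _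
      right
      linarith
    · intro r hr
      have h0 := hr.1
      have h1 := hr.2
      have h2 : 0 < 1 - r ^ 2 := by nlinarith
      have d1 : HasDerivAt (fun r : ℝ => 1 - r ^ 2) (-(2 * r)) r := by
        simpa using (hasDerivAt_pow 2 r).const_sub 1
      have d2 := (hasDerivAt_pow (2 * n + 2) r).mul (d1.rpow_const (p := β + 1) (Or.inl h2.ne'))
      refine d2.congr_deriv ?_
      simp
      ring
    · exact ((intervalIntegrable_aux (by linarith) _).const_mul _).sub
        ((intervalIntegrable_aux hβ _).const_mul _)
  rw [intervalIntegral.integral_sub ((intervalIntegrable_aux (by linarith) _).const_mul _)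
        ((intervalIntegrable_aux hβ _).const_mul _),
    intervalIntegral.integral_const_mul, intervalIntegral.integral_const_mul] at key
  rw [mom_eq, mom_eq]
  linear_combination volume.real (Metric.ball (0 : ℂ) 1) * key

lemma mom_succ {β : ℝ} (hβ : -1 < β) (n : ℕ) :
    mom β (n + 1) = mom β n * ((n + 1) / (n + β + 2)) := by
  have h1 := mom_beta_succ hβ n
  have h2 := mom_parts hβ n
  have : (0 : ℝ) < n + β + 2 := by have : (0 : ℝ) ≤ n := n.cast_nonneg
                                   linarith
  field_simp
  rw [h1] at h2
  linear_combination -h2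

lemma mom_beta_succ' {β : ℝ} (hβ : -1 < β) (n : ℕ) :
    mom (β + 1) n = mom β n * ((β + 1) / (n + β + 2)) := by
  rw [mom_beta_succ hβ, mom_succ hβ]
  have : (0 : ℝ) < n + β + 2 := by have : (0 : ℝ) ≤ n := n.cast_nonneg
                                   linarith
  field_simp
  ring

lemma mom_anti {β : ℝ} (hβ : -1 < β) : Antitone (mom β) := by
  refine antitone_nat_of_succ_le fun n => ?_
  have h := mom_beta_succ hβ n
  have := mom_pos (β := β + 1) (by linarith) n
  linarith

/-- The moments are reciprocal to the Taylor coefficients of the Bergman kernel. -/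
lemma binCoef_mul_mom {β : ℝ} (hβ : -1 < β) (n : ℕ) :
    binCoef (2 + β) n * mom β n = mom β 0 := by
  induction n with
  | zero => simp [binCoef_zero]
  | succ n ih =>
    rw [binCoef_succ, mom_succ hβ, ← ih]
    have : (0 : ℝ) < n + β + 2 := by have : (0 : ℝ) ≤ n := n.cast_nonneg
                                     linarith
    have : (0 : ℝ) < 2 + β + n := by linarith
    field_simp
    ring

/-- Doubling: halving the index increases a moment at most by a constant factor. -/
lemma mom_half_le {β : ℝ} (hβ : -1 < β) (n : ℕ) :
    mom β (n / 2) ≤ Real.exp (β + 1) * mom β n := by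
  set m := n / 2 with hm
  have hstep : ∀ j : ℕ, mom β m ≤ Real.exp ((β + 1) / (m + 1) * j) * mom β (m + j) := by
    intro j
    induction j with
    | zero => simp
    | succ j ih =>
      refine ih.trans ?_
      have hj : mom β (m + j) ≤ Real.exp ((β + 1) / (m + 1)) * mom β (m + (j + 1)) := by
        rw [← add_assoc, mom_succ hβ]
        have hp := mom_pos hβ (m + j)
        have hexp := Real.add_one_le_exp ((β + 1) / (m + 1))
        have h0 : (0 : ℝ) < (m + j : ℕ) + β + 2 := by
          have : (0 : ℝ) ≤ (m + j : ℕ) := Nat.cast_nonneg _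
          linarith
        have h1 : 1 ≤ ((β + 1) / (m + 1) + 1) * (((m + j : ℕ) + 1) / ((m + j : ℕ) + β + 2)) := by
          push_cast at h0 ⊢
          have : (0 : ℝ) ≤ j := j.cast_nonneg
          have : (0 : ℝ) ≤ m := m.cast_nonneg
          rw [← mul_div_assoc, le_div_iff₀ h0]
          have : (β + 1) / (m + 1) * (m + 1 + j) ≥ β + 1 := by
            rw [div_mul_eq_mul_div, ge_iff_le, le_div_iff₀ (by positivity)]
            nlinarith
          linarith
        calc mom β (m + j) ≤ mom β (m + j) * (((β + 1) / (m + 1) + 1) *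
              (((m + j : ℕ) + 1) / ((m + j : ℕ) + β + 2))) := le_mul_of_one_le_right hp.le h1
          _ = ((β + 1) / (m + 1) + 1) * (mom β (m + j) *
              (((m + j : ℕ) + 1) / ((m + j : ℕ) + β + 2))) := by ring
          _ ≤ _ := by gcongr
      calc _ ≤ Real.exp ((β + 1) / (m + 1) * j) *
            (Real.exp ((β + 1) / (m + 1)) * mom β (m + (j + 1))) := by gcongr
        _ = _ := by
            rw [← mul_assoc, ← Real.exp_add]
            congr 2
            push_cast
            ring
  have h := hstep (m + 1)
  have h2 : (β + 1) / ((m : ℝ) + 1) * ((m + 1 : ℕ) : ℝ) = β + 1 := by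
    push_cast
    have : (m : ℝ) + 1 ≠ 0 := by positivity
    field_simp
  rw [h2] at h
  refine h.trans ?_
  gcongr
  exact mom_anti hβ (by omega)

/-! ### Radial measures and the Forelli–Rudin estimate -/

/-- The measure `φ(|z|) dA` on the unit disc. -/
noncomputable def discMeas (φ : ℝ → ℝ) : Measure ℂ :=
  (volume.restrict (Metric.ball (0 : ℂ) 1)).withDensity (fun z => ENNReal.ofReal (φ ‖z‖))

lemma ae_discMeas (φ : ℝ → ℝ) : ∀ᵐ z ∂(discMeas φ), ‖z‖ < 1 := by
  refine (withDensity_absolutelyContinuous _ _).ae_le ?_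
  filter_upwards [ae_restrict_mem measurableSet_ball] with z hz
  simpa using hz

lemma lintegral_discMeas {φ : ℝ → ℝ} (hφ : Measurable φ) (g : ℂ → ℝ≥0∞) :
    ∫⁻ z, g z ∂(discMeas φ) =
      ∫⁻ z in Metric.ball (0 : ℂ) 1, ENNReal.ofReal (φ ‖z‖) * g z := by
  rw [discMeas, lintegral_withDensity_eq_lintegral_mul_non_measurable _ (by fun_prop)
    (Filter.Eventually.of_forall fun z => ENNReal.ofReal_lt_top)]
  rfl

lemma measurePreserving_discMeas {φ : ℝ → ℝ} (hφ : Measurable φ) {ζ : ℂ} (hζ : ‖ζ‖ = 1) :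
    MeasurePreserving (fun z => ζ * z) (discMeas φ) (discMeas φ) := by
  have hrot : MeasurePreserving (fun z : ℂ => ζ * z) volume volume := by
    have := (rotation (⟨ζ, by simp [Submonoid.unitSphere, hζ]⟩ : Circle)).measurePreserving
    exact this
  have hball : MeasurePreserving (fun z : ℂ => ζ * z)
      (volume.restrict (Metric.ball (0 : ℂ) 1)) (volume.restrict (Metric.ball (0 : ℂ) 1)) := by
    have := hrot.restrict_preimage (s := Metric.ball (0 : ℂ) 1) measurableSet_ball
    convert this using 2
    ext z
    simp [hζ]
  refine ⟨by fun_prop, ?_⟩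
  ext s hs
  rw [Measure.map_apply (by fun_prop) hs, discMeas, withDensity_apply _ (hs.preimage (by fun_prop)),
    withDensity_apply _ hs, ← lintegral_indicator hs, ← lintegral_indicator (hs.preimage (by fun_prop)),
    ← hball.lintegral_comp ((by fun_prop : Measurable _).indicator hs)]
  congr 1 with z
  by_cases h : ζ * z ∈ s <;> simp [h, hζ]

lemma lintegral_norm_pow_discMeas {β : ℝ} (hβ : -1 < β) (n : ℕ) :
    ∫⁻ z, ENNReal.ofReal (‖z‖ ^ (2 * n)) ∂(discMeas fun r => (1 - r ^ 2) ^ β) =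
      ENNReal.ofReal (mom β n) := by
  rw [lintegral_discMeas (by fun_prop), mom,
    ofReal_integral_eq_lintegral_ofReal (integrableOn_mom hβ _)]
  · refine setLIntegral_congr_fun measurableSet_ball fun z hz => ?_
    have h1 : ‖z‖ < 1 := by simpa using hz
    have : 0 < 1 - ‖z‖ ^ 2 := by nlinarith [norm_nonneg z]
    rw [mul_comm, ← ENNReal.ofReal_mul (by positivity)]
  · filter_upwards [ae_restrict_mem measurableSet_ball] with z hz
    have h1 : ‖z‖ < 1 := by simpa using hz
    have : 0 < 1 - ‖z‖ ^ 2 := by nlinarith [norm_nonneg z]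
    simp only [Pi.zero_apply]
    positivity

lemma isFiniteMeasure_discMeas_rpow {β : ℝ} (hβ : -1 < β) :
    IsFiniteMeasure (discMeas fun r => (1 - r ^ 2) ^ β) := by
  refine ⟨?_⟩
  have := lintegral_norm_pow_discMeas hβ 0
  simp at this
  rw [this]
  exact ENNReal.ofReal_lt_top

section Radial

variable {ν : Measure ℂ}

/-- Monomials are orthogonal with respect to rotation invariant measures. -/
lemma integral_monomial_eq_zero
    (hrot : ∀ ζ : ℂ, ‖ζ‖ = 1 → MeasurePreserving (fun z => ζ * z) ν ν) {n m : ℕ} (hnm : n ≠ m) :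
    ∫ w, (starRingEnd ℂ) w ^ n * w ^ m ∂ν = 0 := by
  -- `θ` is chosen so that the rotation by `θ` multiplies the integrand by `exp (π i) = -1`
  set θ : ℝ := Real.pi / ((m : ℝ) - n) with hθ
  have hne : (m : ℝ) - n ≠ 0 := sub_ne_zero.mpr (by exact_mod_cast hnm.symm)
  set ζ : ℂ := Complex.exp (θ * Complex.I) with hζ
  have hζ1 : ‖ζ‖ = 1 := Complex.norm_exp_ofReal_mul_I θ
  have hprod : (starRingEnd ℂ) ζ ^ n * ζ ^ m = -1 := by
    rw [hζ, ← Complex.exp_conj, ← Complex.exp_nat_mul, ← Complex.exp_nat_mul, ← Complex.exp_add,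
      ← Complex.exp_pi_mul_I]
    congr 1
    have h2 : (θ : ℂ) * ((m : ℂ) - n) = Real.pi := by
      have : θ * ((m : ℝ) - n) = Real.pi := by rw [hθ]; field_simp
      exact_mod_cast this
    simp only [map_mul, Complex.conj_ofReal, Complex.conj_I]
    linear_combination Complex.I * h2
  have hmul : MeasurableEmbedding (fun z : ℂ => ζ * z) :=
    measurableEmbedding_mulLeft₀ (by rintro h; simp [h] at hζ1)
  have h := (hrot ζ hζ1).integral_comp hmul (fun w => (starRingEnd ℂ) w ^ n * w ^ m)
  have h2 : ∀ w : ℂ, (starRingEnd ℂ) (ζ * w) ^ n * (ζ * w) ^ m =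
      -((starRingEnd ℂ) w ^ n * w ^ m) := fun w => by
    rw [map_mul, mul_pow, mul_pow]
    linear_combination ((starRingEnd ℂ) w ^ n * w ^ m) * hprod
  simp only [h2, integral_neg] at h
  exact self_eq_neg.mp h.symm

lemma integrable_monomial [IsFiniteMeasure ν] (hν : ∀ᵐ z ∂ν, ‖z‖ < 1) (n m : ℕ) :
    Integrable (fun w => (starRingEnd ℂ) w ^ n * w ^ m) ν := by
  refine Integrable.of_bound (C := 1) (by fun_prop) ?_
  filter_upwards [hν] with z hz
  rw [norm_mul, norm_pow, norm_pow, RCLike.norm_conj]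
  exact mul_le_one₀ (pow_le_one₀ (norm_nonneg _) hz.le) (by positivity)
    (pow_le_one₀ (norm_nonneg _) hz.le)

/-- Parseval's identity for polynomials and a rotation invariant measure. -/
lemma integral_normSq_sum [IsFiniteMeasure ν] (hν : ∀ᵐ z ∂ν, ‖z‖ < 1)
    (hrot : ∀ ζ : ℂ, ‖ζ‖ = 1 → MeasurePreserving (fun z => ζ * z) ν ν) (c : ℕ → ℂ) (N : ℕ) :
    ∫ w, ‖∑ n ∈ Finset.range N, c n * w ^ n‖ ^ 2 ∂ν =
      ∑ n ∈ Finset.range N, ‖c n‖ ^ 2 * ∫ w, ‖w‖ ^ (2 * n) ∂ν := by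
  have hpt : ∀ w : ℂ, ((‖∑ n ∈ Finset.range N, c n * w ^ n‖ ^ 2 : ℝ) : ℂ) =
      ∑ n ∈ Finset.range N, ∑ m ∈ Finset.range N,
        ((starRingEnd ℂ) (c n) * c m) * ((starRingEnd ℂ) w ^ n * w ^ m) := by
    intro w
    rw [Complex.ofReal_pow, ← Complex.conj_mul', map_sum, Finset.sum_mul_sum]
    refine Finset.sum_congr rfl fun n _ => Finset.sum_congr rfl fun m _ => ?_
    rw [map_mul, map_pow]
    ring
  rw [← Complex.ofReal_inj, ← integral_complex_ofReal]
  simp_rw [hpt]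
  rw [integral_finsetSum _ fun n _ => integrable_finsetSum _ fun m _ =>
    (integrable_monomial hν n m).const_mul _]
  push_cast
  refine Finset.sum_congr rfl fun n hn => ?_
  rw [integral_finsetSum _ fun m _ => (integrable_monomial hν n m).const_mul _,
    Finset.sum_eq_single n]
  · rw [integral_const_mul, ← integral_complex_ofReal, ← Complex.conj_mul']
    congr 1
    refine integral_congr_ae (Filter.Eventually.of_forall fun w => ?_)
    simp only
    rw [← mul_pow, Complex.conj_mul']
    push_cast
    ring
  · intro m _ hm
    rw [integral_const_mul, integral_monomial_eq_zero hrot hm.symm, mul_zero]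
  · intro h
    exact absurd hn h

end Radial

/-- Comparison of Taylor coefficients behind the Forelli–Rudin estimate. -/
lemma binCoef_sq_mul_mom_le {α s : ℝ} (hs : 0 < s) (hs' : s < α + 1) :
    ∃ C : ℝ, 0 < C ∧ ∀ n, binCoef ((2 + α) / 2) n ^ 2 * mom (α - s) n ≤ C * binCoef s n := by
  set c := (2 + α) / 2 with hc
  have hc0 : 0 < c := by rw [hc]; linarith
  have hβ : -1 < α - s := by linarith
  set d : ℕ → ℝ := fun n => binCoef c n ^ 2 * mom (α - s) n / binCoef s n with hd
  set u : ℕ → ℝ := fun n => (c - s) ^ 2 / min s 1 * (1 / ((n : ℝ) + 1) ^ 2) with hu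
  have hmin : 0 < min s 1 := lt_min hs one_pos
  have hu0 : ∀ n, 0 ≤ u n := fun n => by positivity
  have hd0 : ∀ n, 0 < d n := fun n => by
    have := binCoef_pos hc0 n
    have := binCoef_pos hs n
    have := mom_pos hβ n
    positivity
  have hsum : Summable u := by
    refine Summable.mul_left _ ?_
    have := (summable_nat_add_iff 1).mpr (Real.summable_one_div_nat_pow.mpr one_lt_two)
    simpa using this
  have hstep : ∀ n, d (n + 1) ≤ d n * (1 + u n) := by
    intro n
    have hn : (0 : ℝ) ≤ n := n.cast_nonneg
    have p1 : (0 : ℝ) < n + (α - s) + 2 := by linarith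
    have p2 : (0 : ℝ) < s + n := by linarith
    have pb := binCoef_pos hs n
    have e : d (n + 1) = d n * ((c + n) ^ 2 / ((n + (α - s) + 2) * (s + n))) := by
      simp only [hd]
      rw [binCoef_succ, binCoef_succ, mom_succ hβ]
      field_simp
    have e2 : (c + n) ^ 2 / ((n + (α - s) + 2) * (s + n)) =
        1 + (c - s) ^ 2 / ((n + (α - s) + 2) * (s + n)) := by
      have : α = 2 * c - 2 := by rw [hc]; ring
      have p3 := (mul_pos p1 p2).ne'
      rw [this] at p3 ⊢
      rw [div_eq_iff p3, add_mul, div_mul_cancel₀ _ p3]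
      ring
    rw [e, e2]
    refine mul_le_mul_of_nonneg_left ?_ (hd0 n).le
    simp only [hu]
    rw [div_mul_div_comm, mul_one]
    have h1 : min s 1 * ((n : ℝ) + 1) ≤ s + n := by
      have := min_le_left s 1
      have := min_le_right s 1
      nlinarith
    have h2 : (n : ℝ) + 1 ≤ n + (α - s) + 2 := by linarith
    have h3 : min s 1 * ((n : ℝ) + 1) ^ 2 ≤ (n + (α - s) + 2) * (s + n) := by
      calc min s 1 * ((n : ℝ) + 1) ^ 2 = (n + 1) * (min s 1 * ((n : ℝ) + 1)) := by ring
        _ ≤ _ := by gcongr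
    gcongr
  refine ⟨d 0 * Real.exp (∑' k, u k), mul_pos (hd0 0) (Real.exp_pos _), fun n => ?_⟩
  have h := le_exp_tsum_of_succ_le (fun n => (hd0 n).le) hu0 hsum hstep n
  rwa [← div_le_iff₀ (binCoef_pos hs n)]

lemma norm_mul_conj_lt_one {z w : ℂ} (hz : ‖z‖ < 1) (hw : ‖w‖ < 1) :
    ‖z * (starRingEnd ℂ) w‖ < 1 := by
  rw [norm_mul, RCLike.norm_conj]
  nlinarith [norm_nonneg z, norm_nonneg w]

/-- The Forelli–Rudin estimate. The kernel is the square of the modulus of a power series in `w`,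
whose integral over the disc is controlled by orthogonality of the monomials. -/
lemma forelli_rudin {α s : ℝ} (hs : 0 < s) (hs' : s < α + 1) :
    ∃ C : ℝ, 0 < C ∧ ∀ z : ℂ, ‖z‖ < 1 →
      ∫⁻ w, ENNReal.ofReal (‖1 - z * (starRingEnd ℂ) w‖ ^ (-(2 + α)))
          ∂(discMeas fun r => (1 - r ^ 2) ^ (α - s)) ≤
        ENNReal.ofReal (C * (1 - ‖z‖ ^ 2) ^ (-s)) := by
  obtain ⟨C, hC, hcoef⟩ := binCoef_sq_mul_mom_le hs hs'
  refine ⟨C, hC, fun z hz => ?_⟩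
  have hβ : -1 < α - s := by linarith
  set ν := discMeas fun r => (1 - r ^ 2) ^ (α - s) with hν
  have : IsFiniteMeasure ν := isFiniteMeasure_discMeas_rpow hβ
  have hball : ∀ᵐ w ∂ν, ‖w‖ < 1 := ae_discMeas _
  have hrot : ∀ ζ : ℂ, ‖ζ‖ = 1 → MeasurePreserving (fun z => ζ * z) ν ν :=
    fun ζ hζ => measurePreserving_discMeas (by fun_prop) hζ
  set c := (2 + α) / 2 with hc
  set S : ℕ → ℂ → ℂ := fun N w => ∑ n ∈ Finset.range N,
    ((binCoef c n : ℂ) * (starRingEnd ℂ) z ^ n) * w ^ n with hS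
  have hmeas : ∀ N, Measurable (S N) := fun N => by fun_prop
  have hlim : ∀ᵐ w ∂ν, ENNReal.ofReal (‖1 - z * (starRingEnd ℂ) w‖ ^ (-(2 + α))) =
      Filter.liminf (fun N => ENNReal.ofReal (‖S N w‖ ^ 2)) Filter.atTop := by
    filter_upwards [hball] with w hw
    have hx : ‖(starRingEnd ℂ) z * w‖ < 1 := by
      simpa [mul_comm] using norm_mul_conj_lt_one hw hz
    have h1 := (hasSum_binCoef c hx).tendsto_sum_nat
    have h2 : Filter.Tendsto (fun N => ENNReal.ofReal (‖S N w‖ ^ 2)) Filter.atTop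
        (nhds (ENNReal.ofReal (‖1 / (1 - (starRingEnd ℂ) z * w) ^ (c : ℂ)‖ ^ 2))) := by
      refine ENNReal.tendsto_ofReal ((h1.norm.pow 2).congr fun N => ?_)
      simp only [hS, mul_pow, mul_assoc]
    rw [h2.liminf_eq]
    congr 1
    have h3 : ‖1 - z * (starRingEnd ℂ) w‖ = ‖1 - (starRingEnd ℂ) z * w‖ := by
      rw [← RCLike.norm_conj (1 - z * (starRingEnd ℂ) w)]
      simp
    rw [h3, norm_div, norm_one, Complex.norm_cpow_real, one_div, inv_pow,
      ← Real.rpow_natCast, ← Real.rpow_mul (norm_nonneg _), Real.rpow_neg (norm_nonneg _)]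
    congr 2
    rw [hc]
    push_cast
    ring
  rw [lintegral_congr_ae hlim]
  refine (lintegral_liminf_le fun N => by fun_prop).trans ?_
  refine Filter.liminf_le_of_frequently_le' (Filter.Frequently.of_forall fun N => ?_)
  have hint : Integrable (fun w => ‖S N w‖ ^ 2) ν := by
    refine Integrable.of_bound (C := (∑ n ∈ Finset.range N, ‖(binCoef c n : ℂ) *
      (starRingEnd ℂ) z ^ n‖) ^ 2) (by fun_prop) ?_
    filter_upwards [hball] with w hw
    rw [norm_pow, norm_norm]
    gcongr
    refine (norm_sum_le _ _).trans (Finset.sum_le_sum fun n _ => ?_)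
    rw [norm_mul _ (w ^ n), norm_pow w]
    exact mul_le_of_le_one_right (norm_nonneg _) (pow_le_one₀ (norm_nonneg _) hw.le)
  rw [← ofReal_integral_eq_lintegral_ofReal hint
    (Filter.Eventually.of_forall fun w => by simp only [Pi.zero_apply]; positivity)]
  refine ENNReal.ofReal_le_ofReal ?_
  simp only [hS]
  rw [integral_normSq_sum hball hrot]
  have hmom : ∀ n : ℕ, ∫ w, ‖w‖ ^ (2 * n) ∂ν = mom (α - s) n := by
    intro n
    rw [integral_eq_lintegral_of_nonneg_ae
      (Filter.Eventually.of_forall fun w => by simp only [Pi.zero_apply]; positivity)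
      (by fun_prop), lintegral_norm_pow_discMeas hβ, ENNReal.toReal_ofReal (mom_pos hβ n).le]
  have hz2 : ‖z‖ ^ 2 < 1 := by nlinarith [norm_nonneg z]
  have hsum := (hasSum_binCoef_real s (sq_nonneg ‖z‖) hz2).mul_left C
  calc _ ≤ ∑ n ∈ Finset.range N, C * (binCoef s n * (‖z‖ ^ 2) ^ n) := by
        refine Finset.sum_le_sum fun n _ => ?_
        rw [hmom, norm_mul, norm_pow, RCLike.norm_conj, mul_pow, Complex.norm_real,
          Real.norm_eq_abs, sq_abs]
        calc _ = (binCoef c n ^ 2 * mom (α - s) n) * (‖z‖ ^ 2) ^ n := by ring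
          _ ≤ (C * binCoef s n) * (‖z‖ ^ 2) ^ n := mul_le_mul_of_nonneg_right (hcoef n) (by positivity)
          _ = _ := by ring
    _ ≤ C * (1 - ‖z‖ ^ 2) ^ (-s) := by
        refine sum_le_hasSum _ (fun n _ => ?_) hsum
        have := binCoef_pos hs n
        positivity

/-! ### The Schur test and the two positive kernels -/

/-- The Schur test with test function `h`, for a kernel `H` that need not be symmetric. -/
lemma schur_test {ν : Measure ℂ} [SFinite ν] {p q : ℝ} (hpq : p.HolderConjugate q)
    {H : ℂ → ℂ → ℝ≥0∞} (hH : Measurable (Function.uncurry H)) {h : ℂ → ℝ≥0∞} (hh : Measurable h)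
    (h0 : ∀ᵐ z ∂ν, h z ≠ 0 ∧ h z ≠ ⊤) {A B : ℝ≥0∞}
    (h1 : ∀ᵐ z ∂ν, ∫⁻ w, H z w * h w ^ q ∂ν ≤ A * h z ^ q)
    (h2 : ∀ᵐ w ∂ν, ∫⁻ z, H z w * h z ^ p ∂ν ≤ B * h w ^ p)
    {F : ℂ → ℝ≥0∞} (hF : Measurable F) :
    ∫⁻ z, (∫⁻ w, H z w * F w ∂ν) ^ p ∂ν ≤ A ^ (p / q) * B * ∫⁻ z, F z ^ p ∂ν := by
  have hp := hpq.pos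
  have hq := hpq.symm.pos
  have hH1 : ∀ z, Measurable (H z) := fun z => hH.of_uncurry_left
  have hH2 : ∀ w, Measurable fun z => H z w := fun w => hH.of_uncurry_right
  have hpoint : ∀ᵐ z ∂ν, (∫⁻ w, H z w * F w ∂ν) ^ p ≤
      A ^ (p / q) * ∫⁻ w, h z ^ p * (H z w * F w ^ p * (h w ^ p)⁻¹) ∂ν := by
    filter_upwards [h1] with z hz
    have hz1 := hH1 z
    have e1 : ∫⁻ w, H z w * F w ∂ν =
        ∫⁻ w, ((fun w => H z w ^ (1 / q) * h w) * (fun w => H z w ^ (1 / p) * F w * (h w)⁻¹)) w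
          ∂ν := by
      refine lintegral_congr_ae ?_
      filter_upwards [h0] with w hw
      have : H z w = H z w ^ (1 / q) * H z w ^ (1 / p) := by
        rw [← ENNReal.rpow_add_of_nonneg _ _ (by positivity) (by positivity)]
        have : 1 / q + 1 / p = 1 := by simpa [add_comm] using hpq.inv_add_inv_eq_one
        rw [this, ENNReal.rpow_one]
      simp only [Pi.mul_apply]
      calc H z w * F w = H z w ^ (1 / q) * H z w ^ (1 / p) * F w * (h w * (h w)⁻¹) := by
            rw [ENNReal.mul_inv_cancel hw.1 hw.2, mul_one, ← this]
        _ = _ := by ring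
    have e2 := ENNReal.lintegral_mul_le_Lp_mul_Lq ν hpq.symm
      (f := fun w => H z w ^ (1 / q) * h w) (g := fun w => H z w ^ (1 / p) * F w * (h w)⁻¹)
      (by fun_prop) (by fun_prop)
    have e3 : ∀ w, (H z w ^ (1 / q) * h w) ^ q = H z w * h w ^ q := fun w => by
      rw [ENNReal.mul_rpow_of_nonneg _ _ hq.le, ← ENNReal.rpow_mul, one_div_mul_cancel hq.ne',
        ENNReal.rpow_one]
    have e4 : ∀ w, (H z w ^ (1 / p) * F w * (h w)⁻¹) ^ p = H z w * F w ^ p * (h w ^ p)⁻¹ :=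
      fun w => by
        rw [ENNReal.mul_rpow_of_nonneg _ _ hp.le, ENNReal.mul_rpow_of_nonneg _ _ hp.le,
          ← ENNReal.rpow_mul, one_div_mul_cancel hp.ne', ENNReal.rpow_one, ENNReal.inv_rpow]
    simp only [e3, e4] at e2
    rw [lintegral_const_mul _ (by fun_prop), e1]
    calc _ ≤ ((∫⁻ w, H z w * h w ^ q ∂ν) ^ (1 / q) *
          (∫⁻ w, H z w * F w ^ p * (h w ^ p)⁻¹ ∂ν) ^ (1 / p)) ^ p := by gcongr
      _ ≤ ((A * h z ^ q) ^ (1 / q) *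
          (∫⁻ w, H z w * F w ^ p * (h w ^ p)⁻¹ ∂ν) ^ (1 / p)) ^ p := by gcongr
      _ = _ := by
        rw [ENNReal.mul_rpow_of_nonneg _ _ hp.le, ← ENNReal.rpow_mul, ← ENNReal.rpow_mul,
          one_div_mul_cancel hp.ne', ENNReal.rpow_one,
          ENNReal.mul_rpow_of_nonneg _ _ (by positivity), ← ENNReal.rpow_mul,
          show q * (1 / q * p) = p by field_simp, show 1 / q * p = p / q by ring, mul_assoc]
  refine (lintegral_mono_ae hpoint).trans ?_
  have hm : Measurable (Function.uncurry fun z w => h z ^ p * (H z w * F w ^ p * (h w ^ p)⁻¹)) := by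
    have : Measurable fun x : ℂ × ℂ => H x.1 x.2 := hH
    simp only [Function.uncurry_def]
    fun_prop
  have hm' : Measurable fun z => ∫⁻ w, h z ^ p * (H z w * F w ^ p * (h w ^ p)⁻¹) ∂ν :=
    hm.lintegral_prod_right'
  rw [lintegral_const_mul _ hm', mul_assoc]
  gcongr
  rw [lintegral_lintegral_swap hm.aemeasurable, ← lintegral_const_mul _ (by fun_prop)]
  refine lintegral_mono_ae ?_
  filter_upwards [h2, h0] with w hw hw0
  have hw2 := hH2 w
  calc ∫⁻ z, h z ^ p * (H z w * F w ^ p * (h w ^ p)⁻¹) ∂ν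
      = ∫⁻ z, (F w ^ p * (h w ^ p)⁻¹) * (H z w * h z ^ p) ∂ν := by
        congr 1 with z
        ring
    _ = (F w ^ p * (h w ^ p)⁻¹) * ∫⁻ z, (H z w * h z ^ p) ∂ν :=
        lintegral_const_mul _ (by fun_prop)
    _ ≤ (F w ^ p * (h w ^ p)⁻¹) * (B * h w ^ p) := by gcongr
    _ = B * F w ^ p * (h w ^ p * (h w ^ p)⁻¹) := by ring
    _ = B * F w ^ p := by
        rw [ENNReal.mul_inv_cancel, mul_one]
        · simp [ENNReal.rpow_eq_zero_iff, hw0.1, hw0.2]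
        · simp [ENNReal.rpow_eq_top_iff, hw0.1, hw0.2]

/-- The modulus of the standard weighted Bergman kernel, up to a constant. -/
noncomputable def stdKer (α : ℝ) (z w : ℂ) : ℝ≥0∞ :=
  ENNReal.ofReal (‖1 - z * (starRingEnd ℂ) w‖ ^ (-(2 + α)))

lemma stdKer_symm (α : ℝ) (z w : ℂ) : stdKer α z w = stdKer α w z := by
  rw [stdKer, stdKer, ← RCLike.norm_conj (1 - z * (starRingEnd ℂ) w)]
  simp [mul_comm]

lemma measurable_stdKer (α : ℝ) : Measurable (Function.uncurry (stdKer α)) := by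
  simp only [Function.uncurry_def, stdKer]
  fun_prop

/-- A kernel `∑ eₙ |z|ⁿ |w|ⁿ`. -/
noncomputable def errKer (e : ℕ → ℝ) (z w : ℂ) : ℝ≥0∞ :=
  ∑' n, ENNReal.ofReal (e n * (‖z‖ * ‖w‖) ^ n)

lemma errKer_symm (e : ℕ → ℝ) (z w : ℂ) : errKer e z w = errKer e w z := by
  simp only [errKer, mul_comm ‖z‖]

lemma measurable_errKer (e : ℕ → ℝ) : Measurable (Function.uncurry (errKer e)) := by
  simp only [Function.uncurry_def, errKer]
  fun_prop

section

variable {α Mb : ℝ} {φ : ℝ → ℝ}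

lemma lintegral_discMeas_le (hφ : Measurable φ)
    (hhi : ∀ r ∈ Set.Ico (0 : ℝ) 1, φ r ≤ Mb * (1 - r ^ 2) ^ α) (hMb : 0 ≤ Mb) (g : ℂ → ℝ≥0∞) :
    ∫⁻ z, g z ∂(discMeas φ) ≤
      ENNReal.ofReal Mb * ∫⁻ z, g z ∂(discMeas fun r => (1 - r ^ 2) ^ α) := by
  rw [lintegral_discMeas hφ, lintegral_discMeas (by fun_prop),
    ← lintegral_const_mul' _ _ ENNReal.ofReal_ne_top]
  refine setLIntegral_mono' measurableSet_ball fun z hz => ?_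
  rw [← mul_assoc, ← ENNReal.ofReal_mul hMb]
  gcongr
  exact hhi _ ⟨norm_nonneg z, by simpa using hz⟩

lemma isFiniteMeasure_discMeas (hα : -1 < α) (hφ : Measurable φ)
    (hhi : ∀ r ∈ Set.Ico (0 : ℝ) 1, φ r ≤ Mb * (1 - r ^ 2) ^ α) (hMb : 0 ≤ Mb) :
    IsFiniteMeasure (discMeas φ) := by
  refine ⟨?_⟩
  have h := lintegral_discMeas_le hφ hhi hMb 1
  have := isFiniteMeasure_discMeas_rpow hα
  simp only [Pi.one_apply, lintegral_one] at h
  exact h.trans_lt (ENNReal.mul_lt_top ENNReal.ofReal_lt_top (measure_lt_top _ _))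

/-- The Schur condition for `stdKer` with test function `(1 - |w|²)^(-ε)` and exponent `t`: the
Forelli–Rudin estimate for the weight `(1 - |w|²)^(α - ε t)`. -/
lemma stdKer_schur_aux (hφ : Measurable φ)
    (hhi : ∀ r ∈ Set.Ico (0 : ℝ) 1, φ r ≤ Mb * (1 - r ^ 2) ^ α) (hMb : 0 ≤ Mb)
    {ε t : ℝ} (ht : 0 ≤ t) (h0 : 0 < ε * t) (h1 : ε * t < α + 1) :
    ∃ A : ℝ≥0∞, A ≠ ⊤ ∧ ∀ z : ℂ, ‖z‖ < 1 →
      ∫⁻ w, stdKer α z w * ENNReal.ofReal ((1 - ‖w‖ ^ 2) ^ (-ε)) ^ t ∂(discMeas φ) ≤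
        A * ENNReal.ofReal ((1 - ‖z‖ ^ 2) ^ (-ε)) ^ t := by
  obtain ⟨C, hC, hFR⟩ := forelli_rudin h0 h1
  have hpow : ∀ w : ℂ, ‖w‖ < 1 → ENNReal.ofReal ((1 - ‖w‖ ^ 2) ^ (-ε)) ^ t =
      ENNReal.ofReal ((1 - ‖w‖ ^ 2) ^ (-(ε * t))) := fun w hw => by
    have : 0 < 1 - ‖w‖ ^ 2 := by nlinarith [norm_nonneg w]
    rw [ENNReal.ofReal_rpow_of_nonneg (by positivity) ht, ← Real.rpow_mul this.le]
    ring_nf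
  refine ⟨ENNReal.ofReal Mb * ENNReal.ofReal C,
    ENNReal.mul_ne_top ENNReal.ofReal_ne_top ENNReal.ofReal_ne_top, fun z hz => ?_⟩
  refine (lintegral_discMeas_le hφ hhi hMb _).trans ?_
  rw [mul_assoc]
  gcongr
  rw [hpow z hz, ← ENNReal.ofReal_mul hC.le]
  refine le_trans (le_of_eq ?_) (hFR z hz)
  rw [lintegral_discMeas (by fun_prop), lintegral_discMeas (by fun_prop)]
  refine setLIntegral_congr_fun measurableSet_ball fun w hw => ?_
  have hw : ‖w‖ < 1 := by simpa using hw
  have hpos : 0 < 1 - ‖w‖ ^ 2 := by nlinarith [norm_nonneg w]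
  rw [hpow w hw, stdKer, sub_eq_add_neg α, Real.rpow_add hpos,
    ENNReal.ofReal_mul (by positivity)]
  ring

/-- The positive operator with kernel `|1 - z w̄|^(-(2+α))` is bounded on `L^p`. -/
lemma stdKer_bounded (hα : -1 < α) (hφ : Measurable φ)
    (hhi : ∀ r ∈ Set.Ico (0 : ℝ) 1, φ r ≤ Mb * (1 - r ^ 2) ^ α) (hMb : 0 ≤ Mb)
    {p : ℝ} (hp : 1 < p) :
    ∃ A : ℝ≥0∞, A ≠ ⊤ ∧ ∀ F : ℂ → ℝ≥0∞, Measurable F →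
      ∫⁻ z, (∫⁻ w, stdKer α z w * F w ∂(discMeas φ)) ^ p ∂(discMeas φ) ≤
        A * ∫⁻ z, F z ^ p ∂(discMeas φ) := by
  have := isFiniteMeasure_discMeas hα hφ hhi hMb
  obtain ⟨q, hpq⟩ : ∃ q, p.HolderConjugate q := ⟨_, Real.HolderConjugate.conjExponent hp⟩
  have hp0 := hpq.pos
  have hq0 := hpq.symm.pos
  have hq := hpq.symm.lt
  -- any `ε > 0` with `ε * p` and `ε * q` less than `α + 1` would do
  set ε := (α + 1) / (2 * p * q) with hε
  have hα' : 0 < α + 1 := by linarith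
  have hεp : ε * p = (α + 1) / (2 * q) := by rw [hε]; field_simp
  have hεq : ε * q = (α + 1) / (2 * p) := by rw [hε]; field_simp
  have lq : ε * q < α + 1 := by
    rw [hεq]
    exact div_lt_self hα' (by linarith)
  have lp : ε * p < α + 1 := by
    rw [hεp]
    exact div_lt_self hα' (by linarith)
  obtain ⟨A, hA, h1⟩ := stdKer_schur_aux hφ hhi hMb (ε := ε) hq0.le (by positivity) lq
  obtain ⟨B, hB, h2⟩ := stdKer_schur_aux hφ hhi hMb (ε := ε) hp0.le (by positivity) lp
  refine ⟨A ^ (p / q) * B, ENNReal.mul_ne_top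
    (ENNReal.rpow_ne_top_of_nonneg (by positivity) hA) hB, fun F hF => ?_⟩
  refine schur_test hpq (measurable_stdKer α)
    (h := fun z => ENNReal.ofReal ((1 - ‖z‖ ^ 2) ^ (-ε))) (by fun_prop) ?_ ?_ ?_ hF
  · filter_upwards [ae_discMeas φ] with z hz
    have hpos : 0 < 1 - ‖z‖ ^ 2 := by nlinarith [norm_nonneg z]
    exact ⟨by simpa using Real.rpow_pos_of_pos hpos _, ENNReal.ofReal_ne_top⟩
  · filter_upwards [ae_discMeas φ] with z hz using h1 z hz
  · filter_upwards [ae_discMeas φ] with w hw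
    simpa only [stdKer_symm α _ w] using h2 w hw

/-- The operator with kernel `∑ eₙ |z|ⁿ |w|ⁿ` is bounded on `L^p` when `∑ eₙ mom α n` converges: the
constant function `1` serves in the Schur test, since `∫ |w|ⁿ` is comparable to `mom α n`. -/
lemma errKer_bounded (hα : -1 < α) (hφ : Measurable φ)
    (hhi : ∀ r ∈ Set.Ico (0 : ℝ) 1, φ r ≤ Mb * (1 - r ^ 2) ^ α) (hMb : 0 ≤ Mb)
    {e : ℕ → ℝ} (he0 : ∀ n, 0 ≤ e n) (he : Summable fun n => e n * mom α n)
    {p : ℝ} (hp : 1 < p) :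
    ∃ A : ℝ≥0∞, A ≠ ⊤ ∧ ∀ F : ℂ → ℝ≥0∞, Measurable F →
      ∫⁻ z, (∫⁻ w, errKer e z w * F w ∂(discMeas φ)) ^ p ∂(discMeas φ) ≤
        A * ∫⁻ z, F z ^ p ∂(discMeas φ) := by
  have := isFiniteMeasure_discMeas hα hφ hhi hMb
  obtain ⟨q, hpq⟩ : ∃ q, p.HolderConjugate q := ⟨_, Real.HolderConjugate.conjExponent hp⟩
  have hp0 := hpq.pos
  have hq0 := hpq.symm.pos
  set A : ℝ≥0∞ := ENNReal.ofReal Mb * (ENNReal.ofReal (Real.exp (α + 1)) *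
    ENNReal.ofReal (∑' n, e n * mom α n)) with hA
  have hAtop : A ≠ ⊤ := ENNReal.mul_ne_top ENNReal.ofReal_ne_top
    (ENNReal.mul_ne_top ENNReal.ofReal_ne_top ENNReal.ofReal_ne_top)
  have key : ∀ z : ℂ, ‖z‖ < 1 → ∫⁻ w, errKer e z w ∂(discMeas φ) ≤ A := by
    intro z hz
    refine (lintegral_discMeas_le hφ hhi hMb _).trans ?_
    rw [hA]
    gcongr
    simp only [errKer]
    rw [lintegral_tsum fun n => by fun_prop,
      ENNReal.ofReal_tsum_of_nonneg (fun n => mul_nonneg (he0 n) (mom_pos hα n).le) he,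
      ← ENNReal.tsum_mul_left]
    refine ENNReal.tsum_le_tsum fun n => ?_
    calc ∫⁻ w, ENNReal.ofReal (e n * (‖z‖ * ‖w‖) ^ n) ∂(discMeas fun r => (1 - r ^ 2) ^ α)
        ≤ ∫⁻ w, ENNReal.ofReal (e n) * ENNReal.ofReal (‖w‖ ^ (2 * (n / 2)))
            ∂(discMeas fun r => (1 - r ^ 2) ^ α) := by
          refine lintegral_mono_ae ?_
          filter_upwards [ae_discMeas _] with w hw
          rw [← ENNReal.ofReal_mul (he0 n), mul_pow]
          refine ENNReal.ofReal_le_ofReal (mul_le_mul_of_nonneg_left ?_ (he0 n))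
          calc ‖z‖ ^ n * ‖w‖ ^ n ≤ 1 * ‖w‖ ^ (2 * (n / 2)) :=
                mul_le_mul (pow_le_one₀ (norm_nonneg _) hz.le)
                  (pow_le_pow_of_le_one (norm_nonneg _) hw.le (by omega)) (by positivity)
                  zero_le_one
            _ = _ := one_mul _
      _ = ENNReal.ofReal (e n * mom α (n / 2)) := by
          rw [lintegral_const_mul' _ _ ENNReal.ofReal_ne_top, lintegral_norm_pow_discMeas hα,
            ENNReal.ofReal_mul (he0 n)]
      _ ≤ ENNReal.ofReal (Real.exp (α + 1) * (e n * mom α n)) := by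
          refine ENNReal.ofReal_le_ofReal ?_
          have := mul_le_mul_of_nonneg_left (mom_half_le hα n) (he0 n)
          linarith
      _ = _ := ENNReal.ofReal_mul (Real.exp_pos _).le
  refine ⟨A ^ (p / q) * A, ENNReal.mul_ne_top
    (ENNReal.rpow_ne_top_of_nonneg (by positivity) hAtop) hAtop, fun F hF => ?_⟩
  refine schur_test hpq (measurable_errKer e) (h := fun _ => 1) (by fun_prop) ?_ ?_ ?_ hF
  · simp
  · filter_upwards [ae_discMeas φ] with z hz
    simpa using key z hz
  · filter_upwards [ae_discMeas φ] with w hw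
    simpa [errKer_symm e _ w] using key w hw

end

/-! ### Moments and kernel of a perturbed weight -/

/-- The moment `∫_𝔻 |z|²ⁿ φ(|z|) dA` of a radial weight. -/
noncomputable def gam (φ : ℝ → ℝ) (n : ℕ) : ℝ :=
  ∫ z in Metric.ball (0 : ℂ) 1, ‖z‖ ^ (2 * n) * φ ‖z‖

/-- The conditions on a radial weight `φ(|z|)` used in the proof: it is comparable to the standard
weight `(1 - |z|²)^α` and has a second order expansion at the boundary. -/
structure GoodWeight (α m Mb b D : ℝ) (φ : ℝ → ℝ) : Prop where
  alpha : -1 < α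
  meas : Measurable φ
  m_pos : 0 < m
  Mb_nonneg : 0 ≤ Mb
  D_nonneg : 0 ≤ D
  lo : ∀ r ∈ Set.Ico (0 : ℝ) 1, m * (1 - r ^ 2) ^ α ≤ φ r
  hi : ∀ r ∈ Set.Ico (0 : ℝ) 1, φ r ≤ Mb * (1 - r ^ 2) ^ α
  expansion : ∀ r ∈ Set.Ico (0 : ℝ) 1,
    |φ r - (1 - b * (1 - r ^ 2)) * (1 - r ^ 2) ^ α| ≤ D * (1 - r ^ 2) ^ (α + 2)

section

variable {α m Mb b D : ℝ} {φ : ℝ → ℝ}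

lemma GoodWeight.nonneg (h : GoodWeight α m Mb b D φ) {r : ℝ} (hr : r ∈ Set.Ico (0 : ℝ) 1) :
    0 ≤ φ r := by
  have := hr.1; have := hr.2
  have : 0 < 1 - r ^ 2 := by nlinarith
  have := h.m_pos
  exact le_trans (by positivity) (h.lo r hr)

lemma GoodWeight.integrableOn (h : GoodWeight α m Mb b D φ) (n : ℕ) :
    IntegrableOn (fun z : ℂ => ‖z‖ ^ n * φ ‖z‖) (Metric.ball (0 : ℂ) 1) := by
  have := h.meas
  refine Integrable.mono' ((integrableOn_mom h.alpha n).const_mul Mb) (by fun_prop) ?_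
  filter_upwards [ae_restrict_mem measurableSet_ball] with z hz
  have hr : ‖z‖ ∈ Set.Ico (0 : ℝ) 1 := ⟨norm_nonneg z, by simpa using hz⟩
  rw [norm_mul, Real.norm_of_nonneg (h.nonneg hr), norm_pow, norm_norm]
  have := mul_le_mul_of_nonneg_left (h.hi _ hr) (pow_nonneg (norm_nonneg z) n)
  linarith

lemma GoodWeight.le_gam (h : GoodWeight α m Mb b D φ) (n : ℕ) : m * mom α n ≤ gam φ n := by
  rw [mom, gam, ← integral_const_mul]
  refine setIntegral_mono_on ((integrableOn_mom h.alpha _).const_mul m) (h.integrableOn _)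
    measurableSet_ball fun z hz => ?_
  have hr : ‖z‖ ∈ Set.Ico (0 : ℝ) 1 := ⟨norm_nonneg z, by simpa using hz⟩
  have := mul_le_mul_of_nonneg_left (h.lo _ hr) (pow_nonneg (norm_nonneg z) (2 * n))
  linarith

lemma GoodWeight.gam_pos (h : GoodWeight α m Mb b D φ) (n : ℕ) : 0 < gam φ n :=
  (mul_pos h.m_pos (mom_pos h.alpha n)).trans_le (h.le_gam n)

lemma GoodWeight.abs_gam_sub_le (h : GoodWeight α m Mb b D φ) (n : ℕ) :
    |gam φ n - (mom α n - b * mom (α + 1) n)| ≤ D * mom (α + 2) n := by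
  have hα := h.alpha
  have i0 := integrableOn_mom hα (2 * n)
  have i1 := (integrableOn_mom (by linarith : -1 < α + 1) (2 * n)).const_mul b
  have i2 := (integrableOn_mom (by linarith : -1 < α + 2) (2 * n)).const_mul D
  have i3 : Integrable (fun z : ℂ => ‖z‖ ^ (2 * n) * (1 - ‖z‖ ^ 2) ^ α -
      b * (‖z‖ ^ (2 * n) * (1 - ‖z‖ ^ 2) ^ (α + 1))) (volume.restrict (Metric.ball (0 : ℂ) 1)) :=
    i0.sub i1
  rw [gam, mom, mom, mom, ← integral_const_mul, ← integral_const_mul, ← integral_sub i0 i1,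
    ← integral_sub (h.integrableOn _) i3, ← Real.norm_eq_abs]
  refine norm_integral_le_of_norm_le i2 ?_
  filter_upwards [ae_restrict_mem measurableSet_ball] with z hz
  have hr : ‖z‖ ∈ Set.Ico (0 : ℝ) 1 := ⟨norm_nonneg z, by simpa using hz⟩
  have hr1 := hr.2
  have hpos : 0 < 1 - ‖z‖ ^ 2 := by nlinarith [norm_nonneg z]
  have e : ‖z‖ ^ (2 * n) * φ ‖z‖ - (‖z‖ ^ (2 * n) * (1 - ‖z‖ ^ 2) ^ α -
      b * (‖z‖ ^ (2 * n) * (1 - ‖z‖ ^ 2) ^ (α + 1))) =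
      ‖z‖ ^ (2 * n) * (φ ‖z‖ - (1 - b * (1 - ‖z‖ ^ 2)) * (1 - ‖z‖ ^ 2) ^ α) := by
    rw [Real.rpow_add_one hpos.ne']
    ring
  rw [e, norm_mul, norm_pow, norm_norm, Real.norm_eq_abs]
  have := mul_le_mul_of_nonneg_left (h.expansion _ hr) (pow_nonneg (norm_nonneg z) (2 * n))
  linarith

/-- The remainder in the two-term expansion of `1 / gam φ n`. -/
noncomputable def err (α b : ℝ) (φ : ℝ → ℝ) (n : ℕ) : ℝ :=
  1 / gam φ n - (binCoef (2 + α) n + b * binCoef (1 + α) n) / mom α 0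

lemma binCoef_shift {α : ℝ} (hα : -1 < α) (n : ℕ) :
    binCoef (1 + α) n = binCoef (2 + α) n * ((1 + α) / (n + 1 + α)) := by
  induction n with
  | zero =>
    have : (1 + α) ≠ 0 := by linarith
    simp [binCoef_zero, this]
  | succ n ih =>
    have : (0 : ℝ) ≤ n := n.cast_nonneg
    have h1 : (n : ℝ) + 1 + α ≠ 0 := by linarith
    have h2 : (n : ℝ) + 1 + 1 + α ≠ 0 := by linarith
    rw [binCoef_succ, binCoef_succ, ih]
    push_cast
    field_simp
    ring

/-- The elementary inequality behind the `O(n⁻²)` bound of the relative remainder. -/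
lemma err_aux {b D t t' x δ c N : ℝ} (hN : 1 ≤ N) (hD : 0 ≤ D) (ht : 0 ≤ t)
    (ht' : 0 ≤ t') (htc : t ≤ c / N) (htc' : t' ≤ c / N) (hd : |t' - t| ≤ c / N ^ 2)
    (hδ : |δ| ≤ D * c ^ 2 / N ^ 2) (hx : x = 1 - b * t + δ) :
    |1 - x * (1 + b * t')| ≤
      (|b| * c + |b| ^ 2 * c ^ 2 + D * c ^ 2 * (1 + |b| * c)) / N ^ 2 := by
  have hN0 : 0 < N := by linarith
  have hc : 0 ≤ c := by
    have := ht.trans htc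
    by_contra! hc
    have := div_neg_of_neg_of_pos hc hN0
    linarith
  have hcN : c / N ≤ c := div_le_self hc hN
  have e : 1 - x * (1 + b * t') = -(b * (t' - t)) + b * b * (t * t') - δ * (1 + b * t') := by
    rw [hx]; ring
  have b1 : |b * (t' - t)| ≤ |b| * (c / N ^ 2) := by
    rw [abs_mul]; gcongr
  have b2 : |b * b * (t * t')| ≤ |b| ^ 2 * (c / N * (c / N)) := by
    rw [abs_mul, abs_mul, abs_of_nonneg (mul_nonneg ht ht'), ← sq]; gcongr
  have b3 : |δ * (1 + b * t')| ≤ D * c ^ 2 / N ^ 2 * (1 + |b| * c) := by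
    rw [abs_mul]
    have : |1 + b * t'| ≤ 1 + |b| * c := by
      refine (abs_add_le _ _).trans ?_
      rw [abs_one, abs_mul, abs_of_nonneg ht']
      gcongr
      linarith
    gcongr
  rw [e]
  calc _ ≤ |b * (t' - t)| + |b * b * (t * t')| + |δ * (1 + b * t')| := by
        refine (abs_sub _ _).trans ?_
        gcongr
        refine (abs_add_le _ _).trans ?_
        rw [abs_neg]
    _ ≤ |b| * (c / N ^ 2) + |b| ^ 2 * (c / N * (c / N)) + D * c ^ 2 / N ^ 2 * (1 + |b| * c) := by
        gcongr
    _ = _ := by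
        field_simp

/-- The remainder `err` is `O(n⁻²)` relative to `1 / mom α n`; this is where the second order
expansion of the weight enters. -/
lemma GoodWeight.err_le (h : GoodWeight α m Mb b D φ) :
    ∃ C : ℝ, 0 ≤ C ∧ ∀ n : ℕ, |err α b φ n| * mom α n ≤ C * (1 / ((n : ℝ) + 1) ^ 2) := by
  have hα := h.alpha
  have hm := h.m_pos
  set c := 3 + α with hc
  refine ⟨(|b| * c + |b| ^ 2 * c ^ 2 + D * c ^ 2 * (1 + |b| * c)) / m, ?_, fun n => ?_⟩
  · have := h.D_nonneg
    have : 0 ≤ c := by linarith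
    positivity
  have hn : (0 : ℝ) ≤ n := n.cast_nonneg
  have hmom := mom_pos hα n
  have hmom0 := mom_pos hα 0
  have hgam := h.gam_pos n
  have p1 : (0 : ℝ) < n + 1 + α := by linarith
  have p2 : (0 : ℝ) < n + α + 2 := by linarith
  have p3 : (0 : ℝ) < n + (α + 1) + 2 := by linarith
  have p4 : 0 < 1 + α := by linarith
  have p5 : 0 < α + 1 := by linarith
  have e1 : err α b φ n = 1 / gam φ n * (1 - gam φ n / mom α n *
      (1 + b * ((1 + α) / (n + 1 + α)))) := by
    have hb : binCoef (2 + α) n = mom α 0 / mom α n := by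
      rw [eq_div_iff hmom.ne', binCoef_mul_mom hα]
    rw [err, binCoef_shift hα, hb]
    field_simp
  have hx : gam φ n / mom α n = 1 - b * ((α + 1) / (n + α + 2)) +
      (gam φ n - (mom α n - b * mom (α + 1) n)) / mom α n := by
    rw [mom_beta_succ' hα]
    field_simp
    ring
  have hk := err_aux (b := b) (D := D) (c := c) (N := n + 1) (by linarith) h.D_nonneg
    (t := (α + 1) / (n + α + 2)) (t' := (1 + α) / (n + 1 + α)) (by positivity) (by positivity)
    ?_ ?_ ?_ ?_ hx
  · rw [e1, abs_mul, abs_of_pos (one_div_pos.mpr hgam)]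
    have hle : 1 / gam φ n * mom α n ≤ 1 / m := by
      rw [one_div_mul_eq_div, div_le_div_iff₀ hgam hm, one_mul, mul_comm]
      exact h.le_gam n
    calc _ = (1 / gam φ n * mom α n) *
          |1 - gam φ n / mom α n * (1 + b * ((1 + α) / (n + 1 + α)))| := by ring
      _ ≤ 1 / m * ((|b| * c + |b| ^ 2 * c ^ 2 + D * c ^ 2 * (1 + |b| * c)) / (n + 1) ^ 2) := by
          gcongr
      _ = _ := by ring
  · rw [div_le_div_iff₀ p2 (by positivity)]
    nlinarith
  · rw [div_le_div_iff₀ p1 (by positivity)]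
    nlinarith
  · have : (1 + α) / (n + 1 + α) - (α + 1) / (n + α + 2) =
        (1 + α) / ((n + 1 + α) * (n + α + 2)) := by
      field_simp
      ring
    rw [this, abs_of_pos (by positivity), div_le_div_iff₀ (by positivity) (by positivity)]
    have q1 : (1 + α) * (n + 1) ≤ c * (n + 1 + α) := by nlinarith
    calc (1 + α) * ((n : ℝ) + 1) ^ 2 = ((1 + α) * (n + 1)) * (n + 1) := by ring
      _ ≤ (c * (n + 1 + α)) * (n + α + 2) := by
          refine mul_le_mul q1 (by linarith) (by positivity) ?_
          have : 0 ≤ c := by linarith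
          positivity
      _ = _ := by ring
  · rw [abs_div, abs_of_pos hmom, div_le_iff₀ hmom]
    refine (h.abs_gam_sub_le n).trans ?_
    rw [show α + 2 = α + 1 + 1 by ring, mom_beta_succ' (by linarith), mom_beta_succ' hα]
    have q1 : (α + 1) / ((n : ℝ) + α + 2) ≤ c / (n + 1) := by
      rw [div_le_div_iff₀ p2 (by positivity)]
      nlinarith
    have q2 : (α + 1 + 1) / ((n : ℝ) + (α + 1) + 2) ≤ c / (n + 1) := by
      rw [div_le_div_iff₀ p3 (by positivity)]
      nlinarith
    have := h.D_nonneg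
    have hc0 : 0 ≤ c := by linarith
    calc D * (mom α n * ((α + 1) / (n + α + 2)) * ((α + 1 + 1) / (n + (α + 1) + 2)))
        ≤ D * (mom α n * (c / (n + 1)) * (c / (n + 1))) := by gcongr
      _ = _ := by
          field_simp

lemma GoodWeight.summable_err_mul_mom (h : GoodWeight α m Mb b D φ) :
    Summable fun n => |err α b φ n| * mom α n := by
  obtain ⟨C, hC, hle⟩ := h.err_le
  refine Summable.of_nonneg_of_le
    (fun n => mul_nonneg (abs_nonneg _) (mom_pos h.alpha n).le) hle (Summable.mul_left _ ?_)
  have := (summable_nat_add_iff 1).mpr (Real.summable_one_div_nat_pow.mpr one_lt_two)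
  simpa using this

lemma GoodWeight.summable_one_div_gam (h : GoodWeight α m Mb b D φ) {x : ℝ} (h0 : 0 ≤ x)
    (h1 : x < 1) : Summable fun n => 1 / gam φ n * x ^ n := by
  have hs := ((hasSum_binCoef_real (2 + α) h0 h1).summable).mul_left (1 / (m * mom α 0))
  refine Summable.of_nonneg_of_le (fun n => ?_) (fun n => ?_) hs
  · have := h.gam_pos n
    positivity
  · rw [← mul_assoc]
    gcongr
    have hb : 0 < binCoef (2 + α) n := binCoef_pos (by linarith [h.alpha]) n
    have hm := h.m_pos
    have hmom := mom_pos h.alpha n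
    rw [← binCoef_mul_mom h.alpha n, div_le_iff₀ (h.gam_pos n)]
    have := h.le_gam n
    have : 1 / (m * (binCoef (2 + α) n * mom α n)) * binCoef (2 + α) n * gam φ n =
      gam φ n / (m * mom α n) := by field_simp
    rw [this, le_div_iff₀ (by positivity)]
    linarith

lemma GoodWeight.summable_err (h : GoodWeight α m Mb b D φ) {x : ℝ} (h0 : 0 ≤ x)
    (h1 : x < 1) : Summable fun n => err α b φ n * x ^ n := by
  have s1 := h.summable_one_div_gam h0 h1
  have s2 := (hasSum_binCoef_real (2 + α) h0 h1).summable
  have s3 := ((hasSum_binCoef_real (1 + α) h0 h1).summable).mul_left b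
  refine (s1.sub ((s2.add s3).mul_left (1 / mom α 0))).congr fun n => ?_
  rw [err]
  ring

/-- The reproducing kernel `k(z w̄)` of the weight, `k(x) = ∑ xⁿ / gam φ n`. -/
noncomputable def ker (φ : ℝ → ℝ) (x : ℂ) : ℂ := ∑' n, ((1 / gam φ n : ℝ) : ℂ) * x ^ n

/-- The pointwise kernel estimate: summing the expansion of `1 / gam φ n` gives
`((1 - x)^(-(2+α)) + b (1 - x)^(-(1+α))) / mom α 0 + ∑ errₙ xⁿ` with `x = z w̄`, and `|1 - x| ≤ 2`
absorbs the second term in the first. -/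
lemma GoodWeight.enorm_ker_le (h : GoodWeight α m Mb b D φ) {z w : ℂ} (hz : ‖z‖ < 1)
    (hw : ‖w‖ < 1) :
    ‖ker φ (z * (starRingEnd ℂ) w)‖ₑ ≤
      ENNReal.ofReal ((1 + 2 * |b|) / mom α 0) * stdKer α z w +
        errKer (fun n => |err α b φ n|) z w := by
  have hα := h.alpha
  have hmom0 := mom_pos hα 0
  obtain ⟨x, hx⟩ : ∃ x, x = z * (starRingEnd ℂ) w := ⟨_, rfl⟩
  have hx1 : ‖x‖ < 1 := hx ▸ norm_mul_conj_lt_one hz hw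
  have hxn : ‖x‖ = ‖z‖ * ‖w‖ := by rw [hx, norm_mul, RCLike.norm_conj]
  have s1 := hasSum_binCoef (2 + α) hx1
  have s2 := hasSum_binCoef (1 + α) hx1
  have s3' : Summable fun n => ‖((err α b φ n : ℝ) : ℂ) * x ^ n‖ := by
    refine (h.summable_err (norm_nonneg x) hx1).abs.congr fun n => ?_
    rw [abs_mul, norm_mul _ (x ^ n), norm_pow x, Complex.norm_real, Real.norm_eq_abs,
      abs_of_nonneg (pow_nonneg (norm_nonneg x) n)]
  have s3 := s3'.of_norm.hasSum
  have hk : ker φ x = ((1 / mom α 0 : ℝ) : ℂ) * (1 / (1 - x) ^ ((2 + α : ℝ) : ℂ) +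
      (b : ℂ) * (1 / (1 - x) ^ ((1 + α : ℝ) : ℂ))) + ∑' n, ((err α b φ n : ℝ) : ℂ) * x ^ n := by
    refine HasSum.tsum_eq ?_
    refine (((s1.add (s2.mul_left (b : ℂ))).mul_left ((1 / mom α 0 : ℝ) : ℂ)).add s3).congr_fun ?_
    intro n
    have : (1 / gam φ n : ℝ) = 1 / mom α 0 * (binCoef (2 + α) n + b * binCoef (1 + α) n) +
      err α b φ n := by rw [err]; ring
    rw [this]
    push_cast
    ring
  have hpos : 0 < ‖1 - x‖ := by
    rw [norm_pos_iff, sub_ne_zero]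
    rintro rfl
    simp at hx1
  have hn1 : ‖1 / (1 - x) ^ ((2 + α : ℝ) : ℂ)‖ = ‖1 - x‖ ^ (-(2 + α)) := by
    rw [norm_div, norm_one, Complex.norm_cpow_real, Real.rpow_neg (norm_nonneg _), one_div]
  have hn2 : ‖1 / (1 - x) ^ ((1 + α : ℝ) : ℂ)‖ ≤ 2 * ‖1 - x‖ ^ (-(2 + α)) := by
    rw [norm_div, norm_one, Complex.norm_cpow_real, one_div, ← Real.rpow_neg (norm_nonneg _),
      show -(1 + α) = 1 + -(2 + α) by ring, Real.rpow_add hpos, Real.rpow_one]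
    gcongr
    calc ‖1 - x‖ ≤ ‖(1 : ℂ)‖ + ‖x‖ := norm_sub_le _ _
      _ ≤ 2 := by rw [norm_one]; linarith
  have hmain : ‖((1 / mom α 0 : ℝ) : ℂ) * (1 / (1 - x) ^ ((2 + α : ℝ) : ℂ) +
      (b : ℂ) * (1 / (1 - x) ^ ((1 + α : ℝ) : ℂ)))‖ ≤
      (1 + 2 * |b|) / mom α 0 * ‖1 - x‖ ^ (-(2 + α)) := by
    rw [norm_mul, Complex.norm_real, Real.norm_of_nonneg (by positivity)]
    calc _ ≤ 1 / mom α 0 * (‖1 - x‖ ^ (-(2 + α)) + |b| * (2 * ‖1 - x‖ ^ (-(2 + α)))) := by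
          gcongr
          refine (norm_add_le _ _).trans ?_
          rw [hn1, norm_mul, Complex.norm_real, Real.norm_eq_abs]
          gcongr
      _ = _ := by ring
  rw [← hx, hk]
  refine (enorm_add_le _ _).trans (add_le_add ?_ ?_)
  · rw [stdKer, ← hx, ← ENNReal.ofReal_mul (by positivity), ← ofReal_norm]
    exact ENNReal.ofReal_le_ofReal hmain
  · refine (enorm_tsum_le_tsum_enorm).trans (le_of_eq ?_)
    rw [errKer]
    congr 1 with n
    rw [← ofReal_norm, norm_mul, norm_pow, Complex.norm_real, Real.norm_eq_abs, hxn]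

end

/-! ### The projection as an integral operator -/

section Hilbert

open Filter Topology

variable {ν : Measure ℂ}

lemma norm_pow_le_one_ae (hν : ∀ᵐ z ∂ν, ‖z‖ < 1) (n : ℕ) : ∀ᵐ w ∂ν, ‖w ^ n‖ ≤ 1 := by
  filter_upwards [hν] with z hz
  rw [norm_pow]
  exact pow_le_one₀ (norm_nonneg _) hz.le

variable [IsFiniteMeasure ν]

lemma memLp_monomial (hν : ∀ᵐ z ∂ν, ‖z‖ < 1) (n : ℕ) : MemLp (fun w : ℂ => w ^ n) 2 ν :=
  MemLp.of_bound (by fun_prop) 1 (norm_pow_le_one_ae hν n)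

/-- The monomial `wⁿ` as an element of `L²(ν)`. -/
noncomputable def monom (hν : ∀ᵐ z ∂ν, ‖z‖ < 1) (n : ℕ) : Lp ℂ 2 ν :=
  (memLp_monomial hν n).toLp

lemma coeFn_monom (hν : ∀ᵐ z ∂ν, ‖z‖ < 1) (n : ℕ) : monom hν n =ᵐ[ν] fun w => w ^ n :=
  MemLp.coeFn_toLp _

lemma inner_monom (hν : ∀ᵐ z ∂ν, ‖z‖ < 1) (n : ℕ) (f : Lp ℂ 2 ν) :
    inner ℂ (monom hν n) f = ∫ w, (starRingEnd ℂ) w ^ n * f w ∂ν := by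
  rw [L2.inner_def]
  refine integral_congr_ae ?_
  filter_upwards [coeFn_monom hν n] with w hw
  rw [hw, RCLike.inner_apply, map_pow, mul_comm]

lemma norm_monom_le (hν : ∀ᵐ z ∂ν, ‖z‖ < 1) (n : ℕ) :
    ‖monom hν n‖ ≤ (measureUnivNNReal ν : ℝ) ^ (2 : ℝ≥0∞).toReal⁻¹ * 1 := by
  refine Lp.norm_le_of_ae_bound zero_le_one ?_
  filter_upwards [coeFn_monom hν n, norm_pow_le_one_ae hν n] with w hw h
  rw [hw]
  exact h

/-- The reproducing kernel `K_z = ∑ z̄ⁿ wⁿ / γₙ` as an element of `L²(ν)`. -/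
noncomputable def repK (hν : ∀ᵐ z ∂ν, ‖z‖ < 1) (γ : ℕ → ℝ) (z : ℂ) : Lp ℂ 2 ν :=
  ∑' n, (((1 / γ n : ℝ) : ℂ) * (starRingEnd ℂ) z ^ n) • monom hν n

variable {γ : ℕ → ℝ}

lemma hasSum_repK (hν : ∀ᵐ z ∂ν, ‖z‖ < 1) (hγ : ∀ n, 0 < γ n)
    (hs : ∀ x : ℝ, 0 ≤ x → x < 1 → Summable fun n => 1 / γ n * x ^ n) {z : ℂ} (hz : ‖z‖ < 1) :
    HasSum (fun n => (((1 / γ n : ℝ) : ℂ) * (starRingEnd ℂ) z ^ n) • monom hν n)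
      (repK hν γ z) := by
  refine Summable.hasSum (Summable.of_norm_bounded
    (((hs ‖z‖ (norm_nonneg z) hz)).mul_right
      ((measureUnivNNReal ν : ℝ) ^ (2 : ℝ≥0∞).toReal⁻¹ * 1)) fun n => ?_)
  have := hγ n
  rw [norm_smul, norm_mul, norm_pow, RCLike.norm_conj, Complex.norm_real,
    Real.norm_of_nonneg (by positivity)]
  exact mul_le_mul_of_nonneg_left (norm_monom_le hν n) (by positivity)

lemma hasSum_inner_repK (hν : ∀ᵐ z ∂ν, ‖z‖ < 1) (hγ : ∀ n, 0 < γ n)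
    (hs : ∀ x : ℝ, 0 ≤ x → x < 1 → Summable fun n => 1 / γ n * x ^ n) {z : ℂ} (hz : ‖z‖ < 1)
    (f : Lp ℂ 2 ν) :
    HasSum (fun n => ((1 / γ n : ℝ) : ℂ) * z ^ n * inner ℂ (monom hν n) f)
      (inner ℂ (repK hν γ z) f) := by
  have h := (hasSum_repK hν hγ hs hz).mapL (innerSLFlip ℂ f)
  simp only [innerSLFlip_apply_apply] at h
  refine h.congr_fun fun n => ?_
  rw [inner_smul_left, map_mul, map_pow, Complex.conj_conj, Complex.conj_ofReal]

lemma inner_repK_eq_integral (hν : ∀ᵐ z ∂ν, ‖z‖ < 1) (hγ : ∀ n, 0 < γ n)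
    (hs : ∀ x : ℝ, 0 ≤ x → x < 1 → Summable fun n => 1 / γ n * x ^ n) {z : ℂ} (hz : ‖z‖ < 1)
    (f : Lp ℂ 2 ν) :
    inner ℂ (repK hν γ z) f =
      ∫ w, (∑' n, ((1 / γ n : ℝ) : ℂ) * (z * (starRingEnd ℂ) w) ^ n) * f w ∂ν := by
  have hf : Integrable f ν := (Lp.memLp f).integrable (by norm_num)
  have hle : ∀ n, ∀ᵐ w ∂ν, ‖((1 / γ n : ℝ) : ℂ) * (z * (starRingEnd ℂ) w) ^ n * f w‖ ≤
      1 / γ n * ‖z‖ ^ n * ‖f w‖ := by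
    intro n
    filter_upwards [hν] with w hw
    have := hγ n
    rw [norm_mul, norm_mul, norm_pow, norm_mul, RCLike.norm_conj, Complex.norm_real,
      Real.norm_of_nonneg (by positivity)]
    gcongr
    exact mul_le_of_le_one_right (norm_nonneg _) hw.le
  have hint : ∀ n, Integrable
      (fun w => ((1 / γ n : ℝ) : ℂ) * (z * (starRingEnd ℂ) w) ^ n * f w) ν := fun n =>
    Integrable.mono' (hf.norm.const_mul (1 / γ n * ‖z‖ ^ n))
      ((by fun_prop : AEStronglyMeasurable (fun w : ℂ => ((1 / γ n : ℝ) : ℂ) *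
        (z * (starRingEnd ℂ) w) ^ n) ν).mul hf.aestronglyMeasurable) (hle n)
  have hsum : Summable fun n =>
      ∫ w, ‖((1 / γ n : ℝ) : ℂ) * (z * (starRingEnd ℂ) w) ^ n * f w‖ ∂ν := by
    refine Summable.of_nonneg_of_le (fun n => integral_nonneg fun w => norm_nonneg _) (fun n => ?_)
      ((hs ‖z‖ (norm_nonneg z) hz).mul_right (∫ w, ‖f w‖ ∂ν))
    rw [← integral_const_mul]
    exact integral_mono_ae (hint n).norm (hf.norm.const_mul _) (hle n)
  have h1 := hasSum_integral_of_summable_integral_norm hint hsum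
  have h2 := hasSum_inner_repK hν hγ hs hz f
  have h3 : (fun n => ((1 / γ n : ℝ) : ℂ) * z ^ n * inner ℂ (monom hν n) f) =
      fun n => ∫ w, ((1 / γ n : ℝ) : ℂ) * (z * (starRingEnd ℂ) w) ^ n * f w ∂ν := by
    funext n
    rw [inner_monom, ← integral_const_mul]
    congr 1 with w
    ring
  rw [h3] at h2
  rw [h2.unique h1]
  congr 1 with w
  rw [tsum_mul_right]

lemma inner_repK_monom (hν : ∀ᵐ z ∂ν, ‖z‖ < 1) (hγ : ∀ n, 0 < γ n)
    (hs : ∀ x : ℝ, 0 ≤ x → x < 1 → Summable fun n => 1 / γ n * x ^ n)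
    (horth : ∀ n m, ∫ w, (starRingEnd ℂ) w ^ n * w ^ m ∂ν = if n = m then (γ n : ℂ) else 0)
    {z : ℂ} (hz : ‖z‖ < 1) (m : ℕ) :
    inner ℂ (repK hν γ z) (monom hν m) = z ^ m := by
  refine (hasSum_inner_repK hν hγ hs hz (monom hν m)).unique ?_
  have hin : ∀ n, inner ℂ (monom hν n) (monom hν m) = if n = m then (γ n : ℂ) else 0 := by
    intro n
    rw [← horth, inner_monom]
    refine integral_congr_ae ?_
    filter_upwards [coeFn_monom hν m] with w hw
    rw [hw]
  have e : (fun n => ((1 / γ n : ℝ) : ℂ) * z ^ n * inner ℂ (monom hν n) (monom hν m)) =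
      fun n => if n = m then z ^ m else 0 := by
    funext n
    rw [hin]
    split_ifs with h
    · subst h
      have : (γ n : ℂ) ≠ 0 := by exact_mod_cast (hγ n).ne'
      push_cast
      field_simp
    · simp
  rw [e]
  exact hasSum_ite_eq m (z ^ m)

/-- An element of `L²(ν)` that agrees almost everywhere with a polynomial is a linear combination
of monomials. -/
lemma mem_span_monom (hν : ∀ᵐ z ∂ν, ‖z‖ < 1) (q : Polynomial ℂ) (g : Lp ℂ 2 ν)
    (hg : ⇑g =ᵐ[ν] fun z => q.eval z) : g ∈ Submodule.span ℂ (Set.range (monom hν)) := by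
  have e : g = ∑ n ∈ q.support, q.coeff n • monom hν n := by
    refine Lp.ext ?_
    refine hg.trans ?_
    have h1 : ∀ᵐ z ∂ν, ∀ n, (monom hν n) z = z ^ n := ae_all_iff.mpr fun n => coeFn_monom hν n
    have h2 : ∀ᵐ z ∂ν, ∀ n, (q.coeff n • monom hν n : Lp ℂ 2 ν) z = q.coeff n • (monom hν n) z :=
      ae_all_iff.mpr fun n => Lp.coeFn_smul _ _
    have h3 : ⇑(∑ n ∈ q.support, q.coeff n • monom hν n) =ᵐ[ν]
        ∑ n ∈ q.support, ⇑(q.coeff n • monom hν n) := by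
      have : ∀ s : Finset ℕ, ⇑(∑ n ∈ s, q.coeff n • monom hν n) =ᵐ[ν]
          ∑ n ∈ s, ⇑(q.coeff n • monom hν n) := by
        intro s
        induction s using Finset.induction_on with
        | empty => simpa using Lp.coeFn_zero ℂ 2 ν
        | insert a s ha ih =>
          rw [Finset.sum_insert ha, Finset.sum_insert ha]
          exact (Lp.coeFn_add _ _).trans (EventuallyEq.rfl.add ih)
      exact this _
    filter_upwards [h1, h2, h3] with z h1 h2 h3
    rw [h3, Finset.sum_apply, Polynomial.eval_eq_sum, Polynomial.sum]
    exact Finset.sum_congr rfl fun n _ => by rw [h2, h1, smul_eq_mul]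
  rw [e]
  exact Submodule.sum_mem _ fun n _ => Submodule.smul_mem _ _ (Submodule.subset_span ⟨n, rfl⟩)

/-- The reproducing property on the closure of the polynomials: it passes to limits since an
`L²`-convergent sequence has a subsequence converging almost everywhere. -/
lemma reproducing (hν : ∀ᵐ z ∂ν, ‖z‖ < 1) (hγ : ∀ n, 0 < γ n)
    (hs : ∀ x : ℝ, 0 ≤ x → x < 1 → Summable fun n => 1 / γ n * x ^ n)
    (horth : ∀ n m, ∫ w, (starRingEnd ℂ) w ^ n * w ^ m ∂ν = if n = m then (γ n : ℂ) else 0)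
    {g : Lp ℂ 2 ν} (hg : g ∈ (Submodule.span ℂ (Set.range (monom hν))).topologicalClosure) :
    ∀ᵐ z ∂ν, g z = inner ℂ (repK hν γ z) g := by
  have hspan : ∀ g ∈ Submodule.span ℂ (Set.range (monom hν)),
      ∀ᵐ z ∂ν, g z = inner ℂ (repK hν γ z) g := by
    intro g hg
    induction hg using Submodule.span_induction with
    | mem x hx =>
      obtain ⟨n, rfl⟩ := hx
      filter_upwards [hν, coeFn_monom hν n] with z hz h
      rw [h, inner_repK_monom hν hγ hs horth hz]
    | zero =>
      filter_upwards [Lp.coeFn_zero ℂ 2 ν] with z h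
      rw [h, inner_zero_right, Pi.zero_apply]
    | add x y _ _ hx hy =>
      filter_upwards [Lp.coeFn_add x y, hx, hy] with z h hx hy
      rw [h, inner_add_right, Pi.add_apply, hx, hy]
    | smul c x _ hx =>
      filter_upwards [Lp.coeFn_smul c x, hx] with z h hx
      rw [h, inner_smul_right, Pi.smul_apply, hx, smul_eq_mul]
  obtain ⟨u, hu, hlim⟩ := mem_closure_iff_seq_limit.mp hg
  obtain ⟨ns, hns, hae⟩ := (tendstoInMeasure_of_tendsto_Lp hlim).exists_seq_tendsto_ae
  have hall : ∀ᵐ z ∂ν, ∀ i, u i z = inner ℂ (repK hν γ z) (u i) :=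
    ae_all_iff.mpr fun i => hspan _ (hu i)
  filter_upwards [hae, hall] with z h1 h2
  refine tendsto_nhds_unique h1 ?_
  simp only [h2]
  exact (tendsto_const_nhds.inner hlim).comp hns.tendsto_atTop

/-- The projection onto the closure of the polynomials is the integral operator with kernel
`∑ (z w̄)ⁿ / γₙ`. -/
lemma proj_eq_integral (hν : ∀ᵐ z ∂ν, ‖z‖ < 1) (hγ : ∀ n, 0 < γ n)
    (hs : ∀ x : ℝ, 0 ≤ x → x < 1 → Summable fun n => 1 / γ n * x ^ n)
    (horth : ∀ n m, ∫ w, (starRingEnd ℂ) w ^ n * w ^ m ∂ν = if n = m then (γ n : ℂ) else 0)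
    {K : Submodule ℂ (Lp ℂ 2 ν)} (hK : K = Submodule.span ℂ {g : Lp ℂ 2 ν |
      ∃ q : Polynomial ℂ, ⇑g =ᵐ[ν] fun z => q.eval z})
    {f g : Lp ℂ 2 ν} (hg : g ∈ K.topologicalClosure) (hfg : f - g ∈ K.topologicalClosureᗮ) :
    ∀ᵐ z ∂ν, g z =
      ∫ w, (∑' n, ((1 / γ n : ℝ) : ℂ) * (z * (starRingEnd ℂ) w) ^ n) * f w ∂ν := by
  have hKs : K = Submodule.span ℂ (Set.range (monom hν)) := by
    refine le_antisymm ?_ ?_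
    · rw [hK]
      refine Submodule.span_le.mpr ?_
      rintro g ⟨q, hq⟩
      exact mem_span_monom hν q g hq
    · refine Submodule.span_le.mpr ?_
      rintro _ ⟨n, rfl⟩
      rw [hK]
      refine Submodule.subset_span ⟨Polynomial.X ^ n, ?_⟩
      simpa using coeFn_monom hν n
  have hg' := hg
  rw [hKs] at hg'
  filter_upwards [hν, reproducing hν hγ hs horth hg'] with z hz h
  rw [h, ← inner_repK_eq_integral hν hγ hs hz]
  have hmem : repK hν γ z ∈ K.topologicalClosure := by
    refine K.isClosed_topologicalClosure.mem_of_tendsto (hasSum_repK hν hγ hs hz)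
      (Eventually.of_forall fun s => K.le_topologicalClosure ?_)
    rw [hKs]
    exact Submodule.sum_mem _ fun n _ => Submodule.smul_mem _ _ (Submodule.subset_span ⟨n, rfl⟩)
  have := hfg _ hmem
  rw [inner_sub_right, sub_eq_zero] at this
  exact this.symm

end Hilbert

section

variable {α m Mb b D : ℝ} {φ : ℝ → ℝ}

lemma GoodWeight.integral_monomial (h : GoodWeight α m Mb b D φ) (n k : ℕ) :
    ∫ w, (starRingEnd ℂ) w ^ n * w ^ k ∂(discMeas φ) = if n = k then (gam φ n : ℂ) else 0 := by
  split_ifs with hnk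
  · subst hnk
    have e : ∀ w : ℂ, (starRingEnd ℂ) w ^ n * w ^ n = ((‖w‖ ^ (2 * n) : ℝ) : ℂ) := by
      intro w
      rw [← mul_pow, Complex.conj_mul', pow_mul]
      push_cast
      rfl
    simp only [e]
    have hmeas := h.meas
    rw [integral_complex_ofReal, discMeas, integral_withDensity_eq_integral_toReal_smul (by fun_prop)
      (Filter.Eventually.of_forall fun z => ENNReal.ofReal_lt_top), gam]
    congr 1
    refine setIntegral_congr_fun measurableSet_ball fun z hz => ?_
    have hr : ‖z‖ ∈ Set.Ico (0 : ℝ) 1 := ⟨norm_nonneg z, by simpa using hz⟩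
    rw [ENNReal.toReal_ofReal (h.nonneg hr), smul_eq_mul, mul_comm]
  · exact integral_monomial_eq_zero (fun ζ hζ => measurePreserving_discMeas h.meas hζ) hnk

/-- The `L^p` bound for the weighted Bergman projection of a good weight. -/
lemma GoodWeight.exists_bound (h : GoodWeight α m Mb b D φ) {K : Submodule ℂ (Lp ℂ 2 (discMeas φ))}
    (hK : K = Submodule.span ℂ {g : Lp ℂ 2 (discMeas φ) |
      ∃ q : Polynomial ℂ, ⇑g =ᵐ[discMeas φ] fun z => q.eval z})
    {p : ℝ} (hp : 1 < p) :
    ∃ C : ℝ, 0 < C ∧ ∀ f g : Lp ℂ 2 (discMeas φ), g ∈ K.topologicalClosure →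
      f - g ∈ K.topologicalClosureᗮ →
      (∫⁻ z, ‖g z‖ₑ ^ p ∂(discMeas φ)) ≤ ENNReal.ofReal C * ∫⁻ z, ‖f z‖ₑ ^ p ∂(discMeas φ) := by
  have := isFiniteMeasure_discMeas h.alpha h.meas h.hi h.Mb_nonneg
  have hν := ae_discMeas φ
  obtain ⟨A, hA, hAle⟩ := stdKer_bounded h.alpha h.meas h.hi h.Mb_nonneg hp
  obtain ⟨B, hB, hBle⟩ := errKer_bounded h.alpha h.meas h.hi h.Mb_nonneg
    (fun n => abs_nonneg (err α b φ n)) h.summable_err_mul_mom hp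
  set c := ENNReal.ofReal ((1 + 2 * |b|) / mom α 0) with hc
  have hp0 : 0 < p := by linarith
  set T : ℝ≥0∞ := 2 ^ (p - 1) * (c ^ p * A + B) with hT
  have hTtop : T ≠ ⊤ := by
    refine ENNReal.mul_ne_top (ENNReal.rpow_ne_top_of_nonneg (by linarith) (by simp)) ?_
    refine ENNReal.add_ne_top.mpr ⟨ENNReal.mul_ne_top ?_ hA, hB⟩
    exact ENNReal.rpow_ne_top_of_nonneg hp0.le ENNReal.ofReal_ne_top
  refine ⟨T.toReal + 1, by positivity, fun f g hg hfg => ?_⟩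
  have hrep := proj_eq_integral hν h.gam_pos (fun x => h.summable_one_div_gam) h.integral_monomial
    hK hg hfg
  have hF : Measurable fun w => ‖f w‖ₑ := (Lp.stronglyMeasurable f).measurable.enorm
  have hTC : T ≤ ENNReal.ofReal (T.toReal + 1) := by
    conv_lhs => rw [← ENNReal.ofReal_toReal hTtop]
    exact ENNReal.ofReal_le_ofReal (by linarith)
  set e := fun n => |err α b φ n| with he
  have m1 : ∀ z, Measurable fun w => stdKer α z w * ‖f w‖ₑ := fun z =>
    ((measurable_stdKer α).comp measurable_prodMk_left).mul hF
  have m2 : Measurable fun z => ∫⁻ w, stdKer α z w * ‖f w‖ₑ ∂(discMeas φ) :=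
    Measurable.lintegral_prod_right ((measurable_stdKer α).mul (hF.comp measurable_snd))
  have hpt : ∀ᵐ z ∂(discMeas φ), ‖g z‖ₑ ^ p ≤ 2 ^ (p - 1) *
      (c ^ p * (∫⁻ w, stdKer α z w * ‖f w‖ₑ ∂(discMeas φ)) ^ p +
        (∫⁻ w, errKer e z w * ‖f w‖ₑ ∂(discMeas φ)) ^ p) := by
    filter_upwards [hrep, hν] with z hz hz1
    have hle : ‖g z‖ₑ ≤ c * (∫⁻ w, stdKer α z w * ‖f w‖ₑ ∂(discMeas φ)) +
        ∫⁻ w, errKer e z w * ‖f w‖ₑ ∂(discMeas φ) := by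
      rw [hz, ← lintegral_const_mul _ (m1 z), ← lintegral_add_left ((m1 z).const_mul c)]
      refine (enorm_integral_le_lintegral_enorm _).trans (lintegral_mono_ae ?_)
      filter_upwards [hν] with w hw
      rw [enorm_mul, ← mul_assoc, ← add_mul]
      exact mul_le_mul_left (h.enorm_ker_le hz1 hw) _
    rw [← ENNReal.mul_rpow_of_nonneg _ _ hp0.le]
    exact (ENNReal.rpow_le_rpow hle hp0.le).trans (ENNReal.rpow_add_le_mul_rpow_add_rpow _ _ hp.le)
  calc ∫⁻ z, ‖g z‖ₑ ^ p ∂(discMeas φ)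
      ≤ ∫⁻ z, 2 ^ (p - 1) * (c ^ p * (∫⁻ w, stdKer α z w * ‖f w‖ₑ ∂(discMeas φ)) ^ p +
        (∫⁻ w, errKer e z w * ‖f w‖ₑ ∂(discMeas φ)) ^ p) ∂(discMeas φ) := lintegral_mono_ae hpt
    _ = 2 ^ (p - 1) * (c ^ p * (∫⁻ z, (∫⁻ w, stdKer α z w * ‖f w‖ₑ ∂(discMeas φ)) ^ p
          ∂(discMeas φ)) +
        ∫⁻ z, (∫⁻ w, errKer e z w * ‖f w‖ₑ ∂(discMeas φ)) ^ p ∂(discMeas φ)) := by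
        rw [lintegral_const_mul' _ _ (ENNReal.rpow_ne_top_of_nonneg (by linarith) (by simp)),
          lintegral_add_left ((m2.pow_const p).const_mul _), lintegral_const_mul _ (m2.pow_const p)]
    _ ≤ 2 ^ (p - 1) * (c ^ p * (A * ∫⁻ z, ‖f z‖ₑ ^ p ∂(discMeas φ)) +
          B * ∫⁻ z, ‖f z‖ₑ ^ p ∂(discMeas φ)) := by
        gcongr
        · exact hAle _ hF
        · exact hBle _ hF
    _ = T * ∫⁻ z, ‖f z‖ₑ ^ p ∂(discMeas φ) := by rw [hT]; ring
    _ ≤ _ := by gcongr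

end

/-! ### Taylor expansion of the weight and conclusion -/

/-- Second order Taylor expansion of `M` at `1`, in powers of `1 - r²`. -/
lemma exists_expansion {M : ℝ → ℝ} (hM : ContDiffOn ℝ 2 M (Set.Icc 0 1)) (hM1 : M 1 = 1) :
    ∃ b D : ℝ, 0 ≤ D ∧ ∀ r ∈ Set.Icc (0 : ℝ) 1,
      |M r - (1 - b * (1 - r ^ 2))| ≤ D * (1 - r ^ 2) ^ 2 := by
  have hmaps : Set.MapsTo (fun s : ℝ => 1 - s) (Set.Icc 0 1) (Set.Icc 0 1) := fun s hs =>
    ⟨by linarith [hs.2], by linarith [hs.1]⟩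
  have hg : ContDiffOn ℝ 2 (fun s => M (1 - s)) (Set.Icc 0 1) :=
    hM.comp (by fun_prop) hmaps
  obtain ⟨C, hC⟩ := exists_taylor_mean_remainder_bound (n := 1) zero_le_one
    (by exact_mod_cast hg)
  set d := iteratedDerivWithin 1 (fun s => M (1 - s)) (Set.Icc 0 1) 0 with hd
  refine ⟨-d / 2, |C| + |d| / 2, by positivity, fun r hr => ?_⟩
  have h := hC (1 - r) (hmaps hr)
  rw [taylorWithinEval_succ, taylor_within_zero_eval] at h
  simp only [sub_sub_cancel, sub_zero, hM1, Nat.cast_zero, zero_add, Nat.factorial_zero,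
    Nat.cast_one, mul_one, inv_one, one_mul, pow_one, smul_eq_mul, Real.norm_eq_abs,
    Nat.reduceAdd, ← hd] at h
  have e : M r - (1 - -d / 2 * (1 - r ^ 2)) = (M r - (1 + (1 - r) * d)) + d / 2 * (1 - r) ^ 2 := by
    ring
  have hsq : (1 - r) ^ 2 ≤ (1 - r ^ 2) ^ 2 := by
    have h0 := hr.1
    have h1 := hr.2
    exact pow_le_pow_left₀ (by linarith) (by nlinarith) 2
  rw [e]
  calc _ ≤ |M r - (1 + (1 - r) * d)| + |d / 2 * (1 - r) ^ 2| := abs_add_le _ _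
    _ ≤ |C| * (1 - r) ^ 2 + |d| / 2 * (1 - r) ^ 2 := by
        gcongr
        · exact h.trans (mul_le_mul_of_nonneg_right (le_abs_self C) (by positivity))
        · rw [abs_mul, abs_div, abs_two, abs_of_nonneg (sq_nonneg (1 - r))]
    _ = (|C| + |d| / 2) * (1 - r) ^ 2 := by ring
    _ ≤ _ := by gcongr

/-- The weight `M(r) (1 - r²)^α` is good. Outside `[0,1]` the function `M` is replaced by its
constant extension, which makes the weight measurable and leaves it unchanged on the disc. -/
lemma exists_goodWeight {α : ℝ} (hα : -1 < α) {M : ℝ → ℝ}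
    (hM : ContDiffOn ℝ 2 M (Set.Icc 0 1))
    (hMpos : ∀ r ∈ Set.Icc (0 : ℝ) 1, 0 < M r) (hM1 : M 1 = 1) :
    ∃ m Mb b D : ℝ, GoodWeight α m Mb b D
      (fun r => M (Set.projIcc (0 : ℝ) 1 zero_le_one r) * (1 - r ^ 2) ^ α) := by
  obtain ⟨b, D, hD, hexp⟩ := exists_expansion hM hM1
  have hne : (Set.Icc (0 : ℝ) 1).Nonempty := ⟨0, by simp⟩
  obtain ⟨x, hx, hxmin⟩ := isCompact_Icc.exists_isMinOn hne hM.continuousOn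
  obtain ⟨y, hy, hymax⟩ := isCompact_Icc.exists_isMaxOn hne hM.continuousOn
  have hproj : ∀ r ∈ Set.Ico (0 : ℝ) 1, (Set.projIcc (0 : ℝ) 1 zero_le_one r : ℝ) = r :=
    fun r hr => by rw [Set.projIcc_of_mem _ (Set.Ico_subset_Icc_self hr)]
  have hpos : ∀ r ∈ Set.Ico (0 : ℝ) 1, 0 < 1 - r ^ 2 := fun r hr => by
    nlinarith [hr.1, hr.2]
  have hcont : Continuous fun r => M (Set.projIcc (0 : ℝ) 1 zero_le_one r) :=
    hM.continuousOn.comp_continuous (by fun_prop) fun r => Subtype.coe_prop _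
  refine ⟨M x, M y, b, D, hα, ?_, hMpos x hx, (hMpos y hy).le, hD, ?_, ?_, ?_⟩
  · exact hcont.measurable.mul (by fun_prop)
  · intro r hr
    have := hpos r hr
    simp only [hproj r hr]
    gcongr
    exact hxmin (Set.Ico_subset_Icc_self hr)
  · intro r hr
    have := hpos r hr
    simp only [hproj r hr]
    gcongr
    exact hymax (Set.Ico_subset_Icc_self hr)
  · intro r hr
    have h0 := hpos r hr
    simp only [hproj r hr]
    rw [← sub_mul, abs_mul, abs_of_pos (Real.rpow_pos_of_pos h0 α), Real.rpow_add h0,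
      Real.rpow_two]
    calc _ ≤ D * (1 - r ^ 2) ^ 2 * (1 - r ^ 2) ^ α :=
          mul_le_mul_of_nonneg_right (hexp r (Set.Ico_subset_Icc_self hr)) (by positivity)
      _ = _ := by ring

end BergmanProj

/-- For `μ(z) = M(|z|)(1−|z|²)^α` with `α > −1`, `M` of class `C²`, strictly
positive on `[0,1]` and `M(1) = 1`, the weighted Bergman projection `P` (the orthogonal
projection of `L²(𝔻, μ dA)` onto the closure of the polynomials) satisfies, for every
`1 < p < ∞`, a bound `∫_𝔻 |P f|^p μ dA ≤ C ∫_𝔻 |f|^p μ dA` for all `f ∈ L² ∩ L^p(μ)`. -/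
theorem stmt0 (α : ℝ) (hα : -1 < α) (M : ℝ → ℝ)
    (hM : ContDiffOn ℝ 2 M (Set.Icc 0 1))
    (hMpos : ∀ r ∈ Set.Icc (0:ℝ) 1, 0 < M r) (hM1 : M 1 = 1)
    (ν : Measure ℂ)
    (hν : ν = (volume.restrict (Metric.ball (0:ℂ) 1)).withDensity
      (fun z => ENNReal.ofReal (M ‖z‖ * (1 - ‖z‖ ^ 2) ^ α)))
    (K : Submodule ℂ (Lp ℂ 2 ν))
    (hK : K = Submodule.span ℂ {g : Lp ℂ 2 ν |
      ∃ q : Polynomial ℂ, ⇑g =ᵐ[ν] fun z => q.eval z})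
    (P : Lp ℂ 2 ν →L[ℂ] Lp ℂ 2 ν)
    (hPmem : ∀ f : Lp ℂ 2 ν, P f ∈ K.topologicalClosure)
    (hPorth : ∀ f : Lp ℂ 2 ν, f - P f ∈ K.topologicalClosureᗮ)
    (p : ℝ) (hp : 1 < p) :
    ∃ C : ℝ, 0 < C ∧ ∀ f : Lp ℂ 2 ν,
      (∫⁻ z, (‖f z‖₊ : ℝ≥0∞) ^ p ∂ν) < ⊤ →
      (∫⁻ z, (‖(P f) z‖₊ : ℝ≥0∞) ^ p ∂ν)
        ≤ ENNReal.ofReal C * ∫⁻ z, (‖f z‖₊ : ℝ≥0∞) ^ p ∂ν := by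
  obtain ⟨m, Mb, b, D, h⟩ := BergmanProj.exists_goodWeight hα hM hMpos hM1
  have hν' : ν = BergmanProj.discMeas
      (fun r => M (Set.projIcc (0 : ℝ) 1 zero_le_one r) * (1 - r ^ 2) ^ α) := by
    rw [hν, BergmanProj.discMeas]
    refine withDensity_congr_ae ?_
    filter_upwards [ae_restrict_mem measurableSet_ball] with z hz
    have hr : ‖z‖ ∈ Set.Icc (0 : ℝ) 1 :=
      ⟨norm_nonneg z, (mem_ball_zero_iff.mp hz).le⟩
    simp only [Set.projIcc_of_mem _ hr]
  clear hν
  subst hν'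
  obtain ⟨C, hC, hle⟩ := h.exists_bound hK hp
  exact ⟨C, hC, fun f _ => hle f (P f) (hPmem f) (hPorth f)⟩
end

section
/- Let α > −1 and set λ_α(z) = (1−|z|²)^α on the open unit disc 𝔻. Let P denote the orthogonal projection of L²(𝔻, λ_α dA) onto the closure in L²(𝔻, λ_α dA) of the set of (restrictions to 𝔻 of) complex polynomials. Then for every 1 < p < ∞ there is a constant C > 0 such that for every f ∈ L²(𝔻, λ_α dA) with ∫_𝔻 |f|^p λ_α dA < ∞, one has ∫_𝔻 |P f|^p λ_α dA ≤ C ∫_𝔻 |f|^p λ_α dA. -/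
/-!
The Bergman projection is an integral operator whose kernel is dominated by a positive kernel that
is bounded on every `L^p` by the Schur test.

*Integral formula.* Write `ν` for the measure `(1 - |w|²)^α dA` on the disc. In polar coordinates
the monomials are orthogonal in `L²(ν)` and `∫ |w|^(2n) dν = 2π R n`, where integration by parts
gives `(n + 1) R n = (n + α + 2) R (n + 1)` (`integral_monomials`, `radialMoment_succ`). The
coefficients `a n` of the binomial series of `(1 - x)^(-(2+α))` satisfy the inverse recurrence, so
`a n * R n` is constant, and integrating termwise against `(1 - z w̄)^(-(2+α))` multiplies every
polynomial by `γ = 2π R 0` (`kernel_reproduces`). Taking limits, the same holds almost everywhere on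
the closure of the polynomials (`kernel_reproduces_closure`), while functions orthogonal to all
monomials are annihilated (`kernel_orthogonal`). Hence
`γ (P f)(z) = ∫ (1 - z w̄)^(-(2+α)) f(w) dν(w)`.

*Boundedness.* For `-1 < t < s` the Forelli–Rudin estimate
`∫_𝔻 (1 - |w|²)^t |1 - z w̄|^(-(2+s)) dA(w) ≤ C (1 - |z|²)^(t-s)` (`forelli_rudin`) follows in polar
coordinates from `|1 - ρ e^{iθ}| ≥ ((1 - ρ) + |θ|/π) / 2`. With `s = α` it says that
`h(z) = (1 - |z|²)^(-(α+1)/(pq))`, `q` the conjugate exponent, is a test function for the Schur test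
(`schur_test`), which bounds the operator with kernel `|1 - z w̄|^(-(2+α))` on `L^p(ν)`.
-/

open MeasureTheory
open scoped ENNReal NNReal

/-! ### Binomial expansion of the kernel -/

/-- The coefficients are the binomial coefficients `(b + n - 1 choose n)`; what matters about them is
the recurrence. -/
lemma kernel_series (b : ℝ) : ∃ a : ℕ → ℂ, a 0 = 1 ∧
    (∀ n : ℕ, ((n : ℂ) + 1) * a (n + 1) = (b + n) * a n) ∧
    ∀ x : ℂ, ‖x‖ < 1 → Summable (fun n => ‖a n * x ^ n‖) ∧
      HasSum (fun n => a n * x ^ n) (1 / (1 - x) ^ (b : ℂ)) := by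
  have H := Complex.one_div_one_sub_cpow_hasFPowerSeriesOnBall_zero (b : ℂ)
  refine ⟨fun n => Ring.choose ((b : ℂ) + n - 1) n, by simp, fun n => ?_, fun x hx => ?_⟩
  · have key : ∀ m : ℕ, ((m.factorial : ℕ) : ℂ) * Ring.choose ((b : ℂ) + m - 1) m
        = (ascPochhammer ℂ m).eval (b : ℂ) := by
      intro m
      have := Ring.factorial_nsmul_multichoose_eq_ascPochhammer (b : ℂ) m
      rw [Ring.multichoose_eq, nsmul_eq_mul] at this
      rw [this, Polynomial.ascPochhammer_smeval_eq_eval]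
    have h1 := key (n + 1)
    rw [ascPochhammer_succ_eval, ← key n, Nat.factorial_succ] at h1
    have h0 : ((n.factorial : ℕ) : ℂ) ≠ 0 := by exact_mod_cast n.factorial_ne_zero
    apply mul_left_cancel₀ h0
    push_cast at h1 ⊢
    linear_combination h1
  · have hx' : x ∈ Metric.eball (0 : ℂ) 1 := by
      rw [← ENNReal.ofReal_one, Metric.eball_ofReal]; simpa using hx
    have h1 := H.hasSum hx'
    have h2 : Summable (fun n => ‖FormalMultilinearSeries.ofScalars ℂ
        (fun n : ℕ => Ring.choose ((b : ℂ) + n - 1) n) n (fun _ => x)‖) :=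
      FormalMultilinearSeries.summable_norm_apply _ (Metric.eball_subset_eball H.r_le hx')
    constructor
    · simpa [mul_comm] using h2
    · simpa [mul_comm] using h1

/-! ### The weighted measure and its moments -/

/-- The measure `(1 - |z|²)^α dA` on the open unit disc. -/
noncomputable def bergmanMeasure (α : ℝ) : Measure ℂ :=
  (volume.restrict (Metric.ball (0 : ℂ) 1)).withDensity
    (fun z => ENNReal.ofReal ((1 - ‖z‖ ^ 2) ^ α))

/-- The radial moment `∫₀¹ r^(2n+1) (1 - r²)^α dr`. -/
noncomputable def radialMoment (α : ℝ) (n : ℕ) : ℝ :=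
  ∫ r in (0 : ℝ)..1, r ^ (2 * n + 1) * (1 - r ^ 2) ^ α

lemma radialMoment_integrable {α : ℝ} (hα : -1 < α) (k : ℕ) :
    IntervalIntegrable (fun r : ℝ => r ^ k * (1 - r ^ 2) ^ α) volume 0 1 := by
  have h1 : IntervalIntegrable (fun r : ℝ => (1 - r) ^ α) volume 0 1 := by
    have := (intervalIntegral.intervalIntegrable_rpow' (a := 0) (b := 1) hα).comp_sub_left 1
    simpa using this.symm
  have h2 : ContinuousOn (fun r : ℝ => r ^ k * (1 + r) ^ α) (Set.uIcc 0 1) := by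
    apply ContinuousOn.mul (by fun_prop)
    apply ContinuousOn.rpow_const (by fun_prop)
    intro r hr
    rw [Set.uIcc_of_le zero_le_one] at hr
    left; linarith [hr.1]
  refine (h1.mul_continuousOn h2).congr ?_
  intro r hr
  rw [Set.uIoc_of_le zero_le_one] at hr
  simp only
  rw [show 1 - r ^ 2 = (1 - r) * (1 + r) by ring,
    Real.mul_rpow (by linarith [hr.2]) (by linarith [hr.1])]
  ring

/-- Integrating the derivative of `r^(2n+2) (1 - r²)^(α+1)` over `[0, 1]`. -/
lemma radialMoment_succ {α : ℝ} (hα : -1 < α) (n : ℕ) :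
    ((n : ℝ) + 1) * radialMoment α n = (n + α + 2) * radialMoment α (n + 1) := by
  have i1 := radialMoment_integrable hα (2 * n + 1)
  have i2 := radialMoment_integrable hα (2 * (n + 1) + 1)
  have h := intervalIntegral.integral_eq_sub_of_hasDerivAt_of_le (a := 0) (b := 1)
    (f := fun r : ℝ => r ^ (2 * n + 2) * (1 - r ^ 2) ^ (α + 1))
    (f' := fun r => (2 * (n : ℝ) + 2) * (r ^ (2 * n + 1) * (1 - r ^ 2) ^ α)
      - (2 * (n + α + 2)) * (r ^ (2 * (n + 1) + 1) * (1 - r ^ 2) ^ α))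
    zero_le_one ?_ ?_ ((i1.const_mul _).sub (i2.const_mul _))
  · rw [intervalIntegral.integral_sub (i1.const_mul _) (i2.const_mul _),
      intervalIntegral.integral_const_mul, intervalIntegral.integral_const_mul] at h
    have e : (0 : ℝ) ^ (α + 1) = 0 := Real.zero_rpow (by linarith)
    simp [e] at h
    unfold radialMoment
    linarith
  · apply ContinuousOn.mul (by fun_prop)
    apply ContinuousOn.rpow_const (by fun_prop)
    intro r hr
    right; linarith
  · intro r hr
    have hp : 0 < 1 - r ^ 2 := by nlinarith [hr.1, hr.2]
    have d1 : HasDerivAt (fun r : ℝ => r ^ (2 * n + 2)) ((2 * n + 2 : ℕ) * r ^ (2 * n + 1)) r := by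
      simpa using hasDerivAt_pow (2 * n + 2) r
    have d2 : HasDerivAt (fun r : ℝ => 1 - r ^ 2) (-(2 * r)) r := by
      simpa using (hasDerivAt_pow 2 r).const_sub 1
    have d3 := d2.rpow_const (p := α + 1) (Or.inl hp.ne')
    refine (d1.mul d3).congr_deriv ?_
    rw [add_sub_cancel_right, Real.rpow_add_one hp.ne']
    push_cast
    ring

lemma radialMoment_zero_pos {α : ℝ} (hα : -1 < α) : 0 < radialMoment α 0 := by
  apply intervalIntegral.intervalIntegral_pos_of_pos_on (radialMoment_integrable hα _) _
    zero_lt_one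
  intro r hr
  have hp : 0 < 1 - r ^ 2 := by nlinarith [hr.1, hr.2]
  have := hr.1
  positivity

lemma integral_bergman (α : ℝ) (g : ℂ → ℂ) :
    ∫ w, g w ∂(bergmanMeasure α) =
      ∫ w in Metric.ball (0 : ℂ) 1, (((1 - ‖w‖ ^ 2) ^ α : ℝ) : ℂ) * g w := by
  rw [bergmanMeasure, integral_withDensity_eq_integral_toReal_smul (by fun_prop)
    (ae_of_all _ fun _ => ENNReal.ofReal_lt_top)]
  apply setIntegral_congr_fun Metric.isOpen_ball.measurableSet
  intro w hw
  have h1 : ‖w‖ < 1 := by simpa using hw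
  have hp : 0 ≤ (1 - ‖w‖ ^ 2) ^ α := Real.rpow_nonneg (by nlinarith [norm_nonneg w]) _
  simp only [ENNReal.toReal_ofReal hp, Complex.real_smul]

lemma integral_angle (k : ℤ) :
    ∫ θ in Set.Ioo (-Real.pi) Real.pi, Complex.exp ((k * Complex.I) * θ)
      = if k = 0 then ((2 * Real.pi : ℝ) : ℂ) else 0 := by
  have hpi := Real.pi_pos
  rw [← integral_Ioc_eq_integral_Ioo, ← intervalIntegral.integral_of_le (by linarith)]
  split_ifs with hk
  · subst hk; simp; ring
  · have hk' : (k : ℂ) * Complex.I ≠ 0 := by simp [hk]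
    rw [integral_exp_mul_complex hk', div_eq_zero_iff]
    left
    rw [sub_eq_zero, Complex.exp_eq_exp_iff_exists_int]
    refine ⟨k, ?_⟩
    push_cast
    ring

/-- Polar coordinates separate the integral of `w̄ⁿ wᵐ` into a radial moment and a Fourier
integral, so distinct monomials are orthogonal. -/
lemma integral_monomials (α : ℝ) (n m : ℕ) :
    ∫ w, star w ^ n * w ^ m ∂(bergmanMeasure α) =
      if n = m then ((2 * Real.pi * radialMoment α n : ℝ) : ℂ) else 0 := by
  rw [integral_bergman, ← integral_indicator Metric.isOpen_ball.measurableSet,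
    ← Complex.integral_comp_polarCoord_symm]
  have key : ∀ q ∈ polarCoord.target, q.1 • (Metric.ball (0 : ℂ) 1).indicator
      (fun w => (((1 - ‖w‖ ^ 2) ^ α : ℝ) : ℂ) * (star w ^ n * w ^ m)) (Complex.polarCoord.symm q)
      = ((Set.Ioo (0 : ℝ) 1).indicator
          (fun r => ((r ^ (n + m + 1) * (1 - r ^ 2) ^ α : ℝ) : ℂ)) q.1) *
        Complex.exp ((((m : ℤ) - (n : ℤ) : ℤ) * Complex.I) * q.2) := by
    rintro ⟨r, θ⟩ hq
    rw [polarCoord_target] at hq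
    have hr0 : 0 < r := hq.1
    have hn : ‖Complex.polarCoord.symm (r, θ)‖ = r := by
      rw [Complex.norm_polarCoord_symm, abs_of_pos hr0]
    by_cases hr1 : r < 1
    · rw [Set.indicator_of_mem (by rwa [mem_ball_zero_iff, hn]),
        Set.indicator_of_mem (show r ∈ Set.Ioo (0 : ℝ) 1 from ⟨hr0, hr1⟩), hn]
      have e0 : Complex.polarCoord.symm (r, θ) = r * Complex.exp (θ * Complex.I) := by
        rw [Complex.polarCoord_symm_apply, Complex.exp_mul_I]
        simp
      have e1 : star (Complex.polarCoord.symm (r, θ)) = r * Complex.exp (-θ * Complex.I) := by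
        rw [e0, star_mul, Complex.star_def, Complex.conj_ofReal,
          ← Complex.exp_conj]
        simp [mul_comm]
      have e2 : Complex.exp ((((m : ℤ) - (n : ℤ) : ℤ) * Complex.I) * θ)
          = Complex.exp (-θ * Complex.I) ^ n * Complex.exp (θ * Complex.I) ^ m := by
        rw [← Complex.exp_nat_mul, ← Complex.exp_nat_mul, ← Complex.exp_add]
        congr 1
        push_cast
        ring
      rw [e1, e0, e2, Complex.real_smul]
      push_cast
      ring
    · rw [Set.indicator_of_notMem (by rwa [mem_ball_zero_iff, hn]),
        Set.indicator_of_notMem (fun h => hr1 h.2)]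
      simp
  rw [setIntegral_congr_fun polarCoord.open_target.measurableSet key, polarCoord_target,
    Measure.volume_eq_prod, setIntegral_prod_mul
      (f := (Set.Ioo (0 : ℝ) 1).indicator
          (fun r => ((r ^ (n + m + 1) * (1 - r ^ 2) ^ α : ℝ) : ℂ)))
      (g := fun θ : ℝ => Complex.exp ((((m : ℤ) - (n : ℤ) : ℤ) * Complex.I) * θ)),
    integral_angle]
  by_cases hnm : n = m
  · subst hnm
    rw [if_pos (by simp), if_pos rfl, setIntegral_indicator measurableSet_Ioo,
      Set.inter_eq_right.2 Set.Ioo_subset_Ioi_self, integral_complex_ofReal, radialMoment,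
      intervalIntegral.integral_of_le zero_le_one, integral_Ioc_eq_integral_Ioo,
      show n + n + 1 = 2 * n + 1 by ring]
    push_cast
    ring
  · rw [if_neg (by omega), if_neg hnm, mul_zero]

/-! ### The Forelli–Rudin estimate -/

/-- Both `1 - ρ` and `|θ| / π` are at most `|1 - ρ e^{iθ}|`; the second since
`|1 - u| ≤ 2 |1 - ρ u|` for `|u| = 1` and `|1 - e^{iθ}| = 2 |sin (θ / 2)| ≥ 2 |θ| / π`. -/
lemma norm_kernel_lower {ρ θ : ℝ} (h0 : 0 ≤ ρ) (h1 : ρ < 1) (hθ : |θ| ≤ Real.pi) :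
    ((1 - ρ) + |θ| / Real.pi) / 2 ≤ ‖1 - (ρ : ℂ) * Complex.exp (θ * Complex.I)‖ := by
  have hu : ‖Complex.exp (θ * Complex.I)‖ = 1 := Complex.norm_exp_ofReal_mul_I θ
  set u := Complex.exp (θ * Complex.I) with hu_def
  have hA : 1 - ρ ≤ ‖1 - (ρ : ℂ) * u‖ := by
    have := norm_sub_norm_le (1 : ℂ) ((ρ : ℂ) * u)
    simpa [hu, abs_of_nonneg h0] using this
  have hB : ‖1 - u‖ ≤ ‖1 - (ρ : ℂ) * u‖ + (1 - ρ) := by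
    have h2 : 1 - u = (1 - (ρ : ℂ) * u) + ((ρ - 1 : ℝ) : ℂ) * u := by push_cast; ring
    calc ‖1 - u‖ ≤ ‖1 - (ρ : ℂ) * u‖ + ‖((ρ - 1 : ℝ) : ℂ) * u‖ := by
          rw [h2]; exact norm_add_le _ _
      _ = _ := by
          rw [norm_mul, hu, Complex.norm_real, Real.norm_eq_abs, abs_of_nonpos (by linarith)]; ring
  have hC : 2 * (|θ| / Real.pi) ≤ ‖1 - u‖ := by
    rw [norm_sub_rev, hu_def, mul_comm (θ : ℂ), Complex.norm_exp_I_mul_ofReal_sub_one, norm_mul,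
      Real.norm_eq_abs, Real.norm_eq_abs, abs_two]
    have hpi := Real.pi_pos
    have hs : |Real.sin (θ / 2)| = Real.sin (|θ| / 2) := by
      rw [Real.abs_sin_eq_sin_abs_of_abs_le_pi]
      · rw [abs_div, abs_two]
      · rw [abs_div, abs_two]; linarith
    rw [hs]
    have := Real.mul_le_sin (x := |θ| / 2) (by positivity) (by linarith)
    have h3 : 2 / Real.pi * (|θ| / 2) = |θ| / Real.pi := by ring
    rw [h3] at this
    linarith
  linarith

lemma lintegral_angle {c b : ℝ} (hc : 0 < c) (hb : 1 < b) :
    ∫⁻ θ in Set.Ioo (-Real.pi) Real.pi, ENNReal.ofReal ((c + |θ| / Real.pi) ^ (-b))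
      ≤ ENNReal.ofReal (2 * Real.pi / (b - 1) * c ^ (1 - b)) := by
  have hpi := Real.pi_pos
  have hpos : ∀ θ : ℝ, 0 < c + |θ| / Real.pi := fun θ => by positivity
  have hcont : Continuous fun θ : ℝ => (c + |θ| / Real.pi) ^ (-b) := by
    apply Continuous.rpow_const (by fun_prop)
    intro θ; left; exact (hpos θ).ne'
  have hhalf : ∫ θ in (0 : ℝ)..Real.pi, (c + |θ| / Real.pi) ^ (-b)
      ≤ Real.pi / (b - 1) * c ^ (1 - b) := by
    have h := intervalIntegral.integral_eq_sub_of_hasDerivAt (a := 0) (b := Real.pi)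
      (f := fun θ : ℝ => Real.pi / (1 - b) * (c + θ / Real.pi) ^ (1 - b))
      (f' := fun θ => (c + |θ| / Real.pi) ^ (-b)) ?_ (hcont.intervalIntegrable _ _)
    · rw [h]
      have h1 : 0 < (c + Real.pi / Real.pi) ^ (1 - b) := by positivity
      have h2 : Real.pi / (1 - b) = - (Real.pi / (b - 1)) := by
        rw [← div_neg]; congr 1; ring
      have h3 : 0 < Real.pi / (b - 1) := div_pos hpi (by linarith)
      simp only [h2, zero_div, add_zero]
      nlinarith [mul_pos h3 h1]
    · intro x hx
      rw [Set.uIcc_of_le hpi.le] at hx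
      have hx0 : 0 < c + x / Real.pi := by have := hx.1; positivity
      have h1 : HasDerivAt (fun θ : ℝ => c + θ / Real.pi) (1 / Real.pi) x :=
        ((hasDerivAt_id x).div_const _).const_add _
      have h2 := (h1.rpow_const (p := 1 - b) (Or.inl hx0.ne')).const_mul (Real.pi / (1 - b))
      refine h2.congr_deriv ?_
      rw [abs_of_nonneg hx.1, show 1 - b - 1 = -b by ring]
      have : (1 - b) ≠ 0 := by linarith
      field_simp
  have hneg : ∫ θ in (-Real.pi)..0, (c + |θ| / Real.pi) ^ (-b)
      = ∫ θ in (0 : ℝ)..Real.pi, (c + |θ| / Real.pi) ^ (-b) := by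
    have := intervalIntegral.integral_comp_neg (a := 0) (b := Real.pi)
      (fun θ : ℝ => (c + |θ| / Real.pi) ^ (-b))
    simpa using this.symm
  have hInt : IntervalIntegrable (fun θ : ℝ => (c + |θ| / Real.pi) ^ (-b)) volume
      (-Real.pi) Real.pi := hcont.intervalIntegrable _ _
  rw [intervalIntegrable_iff_integrableOn_Ioo_of_le (by linarith)] at hInt
  rw [← ofReal_integral_eq_lintegral_ofReal hInt
    (ae_of_all _ fun θ => (Real.rpow_pos_of_pos (hpos θ) _).le)]
  apply ENNReal.ofReal_le_ofReal
  rw [← integral_Ioc_eq_integral_Ioo, ← intervalIntegral.integral_of_le (by linarith),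
    ← intervalIntegral.integral_add_adjacent_intervals (hcont.intervalIntegrable _ 0)
      (hcont.intervalIntegrable _ _), hneg]
  calc _ ≤ Real.pi / (b - 1) * c ^ (1 - b) + Real.pi / (b - 1) * c ^ (1 - b) :=
        add_le_add hhalf hhalf
    _ = _ := by ring

/-- The integral is split at `δ`. -/
lemma lintegral_radius_aux {t s δ : ℝ} (ht : -1 < t) (hts : t < s) (hδ : 0 < δ) :
    ∫⁻ x in Set.Ioo (0 : ℝ) 1, ENNReal.ofReal (x ^ t * (max δ x) ^ (-(1 + s)))
      ≤ ENNReal.ofReal ((1 / (t + 1) + 1 / (s - t)) * δ ^ (t - s)) := by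
  have h1 : ∫⁻ x in Set.Ioc (0 : ℝ) δ, ENNReal.ofReal (x ^ t * (max δ x) ^ (-(1 + s)))
      = ENNReal.ofReal (1 / (t + 1) * δ ^ (t - s)) := by
    have hi : IntegrableOn (fun x : ℝ => x ^ t) (Set.Ioc 0 δ) := by
      rw [← intervalIntegrable_iff_integrableOn_Ioc_of_le hδ.le]
      exact intervalIntegral.intervalIntegrable_rpow' ht
    calc _ = ∫⁻ x in Set.Ioc (0 : ℝ) δ, ENNReal.ofReal (x ^ t * δ ^ (-(1 + s))) := by
          apply setLIntegral_congr_fun measurableSet_Ioc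
          intro x hx
          simp only [max_eq_left hx.2]
      _ = ENNReal.ofReal (∫ x in Set.Ioc (0 : ℝ) δ, x ^ t * δ ^ (-(1 + s))) := by
          rw [ofReal_integral_eq_lintegral_ofReal (hi.mul_const _)]
          filter_upwards [ae_restrict_mem measurableSet_Ioc] with x hx
          have := hx.1
          positivity
      _ = _ := by
          rw [integral_mul_const, ← intervalIntegral.integral_of_le hδ.le,
            integral_rpow (Or.inl ht), Real.zero_rpow (by linarith), sub_zero,
            show δ ^ (t - s) = δ ^ (t + 1) * δ ^ (-(1 + s)) by
              rw [← Real.rpow_add hδ]; congr 1; ring]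
          congr 1
          ring
  have h2 : ∫⁻ x in Set.Ioi δ, ENNReal.ofReal (x ^ t * (max δ x) ^ (-(1 + s)))
      = ENNReal.ofReal (1 / (s - t) * δ ^ (t - s)) := by
    have hlt : t + -(1 + s) < -1 := by linarith
    calc _ = ∫⁻ x in Set.Ioi δ, ENNReal.ofReal (x ^ (t + -(1 + s))) := by
          apply setLIntegral_congr_fun measurableSet_Ioi
          intro x hx
          have hx0 : 0 < x := hδ.trans hx
          simp only [max_eq_right (le_of_lt (Set.mem_Ioi.1 hx)), Real.rpow_add hx0]
      _ = ENNReal.ofReal (∫ x in Set.Ioi δ, x ^ (t + -(1 + s))) := by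
          rw [ofReal_integral_eq_lintegral_ofReal (integrableOn_Ioi_rpow_of_lt hlt hδ)]
          filter_upwards [ae_restrict_mem measurableSet_Ioi] with x hx
          have : 0 < x := hδ.trans hx
          positivity
      _ = _ := by
          rw [integral_Ioi_rpow_of_lt hlt hδ, show t + -(1 + s) + 1 = t - s by ring]
          congr 1
          rw [show s - t = -(t - s) by ring]
          have : t - s ≠ 0 := by linarith
          field_simp
  have hd : 0 < δ ^ (t - s) := Real.rpow_pos_of_pos hδ _
  have ht' : 0 < 1 / (t + 1) := by apply one_div_pos.2; linarith
  have hs' : 0 < 1 / (s - t) := by apply one_div_pos.2; linarith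
  calc _ ≤ ∫⁻ x in Set.Ioc (0 : ℝ) δ ∪ Set.Ioi δ,
          ENNReal.ofReal (x ^ t * (max δ x) ^ (-(1 + s))) := by
        apply lintegral_mono_set
        rw [Set.Ioc_union_Ioi_eq_Ioi hδ.le]
        exact Set.Ioo_subset_Ioi_self
    _ ≤ _ := lintegral_union_le _ _ _
    _ = _ := by
        rw [h1, h2, ← ENNReal.ofReal_add (by positivity) (by positivity)]
        congr 1
        ring

/-- The substitution `x = 1 - r` and `1 - ρ r ≥ max (1 - ρ) (1 - r)` reduce to
`lintegral_radius_aux`. -/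
lemma lintegral_radius {t s ρ : ℝ} (ht : -1 < t) (hts : t < s) (h0 : 0 ≤ ρ) (h1 : ρ < 1) :
    ∫⁻ r in Set.Ioo (0 : ℝ) 1, ENNReal.ofReal (r * (1 - r ^ 2) ^ t * (1 - ρ * r) ^ (-(1 + s)))
      ≤ ENNReal.ofReal (2 ^ |t| * ((1 / (t + 1) + 1 / (s - t)) * (1 - ρ) ^ (t - s))) := by
  have hδ : 0 < 1 - ρ := by linarith
  calc _ ≤ ∫⁻ r in Set.Ioo (0 : ℝ) 1, ENNReal.ofReal (2 ^ |t|) *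
          ENNReal.ofReal ((1 - r) ^ t * (max (1 - ρ) (1 - r)) ^ (-(1 + s))) := by
        apply setLIntegral_mono' measurableSet_Ioo
        intro r hr
        obtain ⟨hr0, hr1⟩ := hr
        rw [← ENNReal.ofReal_mul (by positivity)]
        apply ENNReal.ofReal_le_ofReal
        have e1 : (1 - r ^ 2) ^ t ≤ 2 ^ |t| * (1 - r) ^ t := by
          rw [show 1 - r ^ 2 = (1 + r) * (1 - r) by ring,
            Real.mul_rpow (by linarith) (by linarith)]
          apply mul_le_mul_of_nonneg_right _ (Real.rpow_nonneg (by linarith) _)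
          calc (1 + r) ^ t ≤ (1 + r) ^ |t| :=
                Real.rpow_le_rpow_of_exponent_le (by linarith) (le_abs_self t)
            _ ≤ 2 ^ |t| := Real.rpow_le_rpow (by linarith) (by linarith) (abs_nonneg t)
        have e2 : (1 - ρ * r) ^ (-(1 + s)) ≤ (max (1 - ρ) (1 - r)) ^ (-(1 + s)) := by
          apply Real.rpow_le_rpow_of_nonpos
          · exact lt_max_of_lt_left hδ
          · apply max_le <;> nlinarith
          · linarith
        have e3 : 0 ≤ (1 - r ^ 2) ^ t := Real.rpow_nonneg (by nlinarith) _
        have e4 : 0 ≤ (1 - ρ * r) ^ (-(1 + s)) := Real.rpow_nonneg (by nlinarith) _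
        calc r * (1 - r ^ 2) ^ t * (1 - ρ * r) ^ (-(1 + s))
            ≤ 1 * (1 - r ^ 2) ^ t * (1 - ρ * r) ^ (-(1 + s)) := by gcongr
          _ ≤ (2 ^ |t| * (1 - r) ^ t) * (max (1 - ρ) (1 - r)) ^ (-(1 + s)) := by
              rw [one_mul]
              exact mul_le_mul e1 e2 e4 (e3.trans e1)
          _ = _ := by ring
    _ = ENNReal.ofReal (2 ^ |t|) * ∫⁻ r in Set.Ioo (0 : ℝ) 1,
          ENNReal.ofReal ((1 - r) ^ t * (max (1 - ρ) (1 - r)) ^ (-(1 + s))) := by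
        rw [lintegral_const_mul' _ _ ENNReal.ofReal_ne_top]
    _ = ENNReal.ofReal (2 ^ |t|) * ∫⁻ x in Set.Ioo (0 : ℝ) 1,
          ENNReal.ofReal (x ^ t * (max (1 - ρ) x) ^ (-(1 + s))) := by
        congr 1
        have hmp : MeasurePreserving (fun x : ℝ => 1 - x) volume volume :=
          Measure.measurePreserving_sub_left volume 1
        have := hmp.setLIntegral_comp_preimage_emb
          (Homeomorph.subLeft (1 : ℝ)).measurableEmbedding
          (fun x => ENNReal.ofReal (x ^ t * (max (1 - ρ) x) ^ (-(1 + s)))) (Set.Ioo 0 1)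
        simpa using this
    _ ≤ _ := by
        rw [ENNReal.ofReal_mul (p := 2 ^ |t|) (by positivity)]
        gcongr
        exact lintegral_radius_aux ht hts hδ

/-- Rotation invariance of area reduces to the kernel at the point `|z|`. -/
lemma lintegral_rotate (t s : ℝ) (z : ℂ) :
    ∫⁻ w in Metric.ball (0 : ℂ) 1,
      ENNReal.ofReal ((1 - ‖w‖ ^ 2) ^ t * ‖1 - z * star w‖ ^ (-(2 + s)))
    = ∫⁻ w in Metric.ball (0 : ℂ) 1,
      ENNReal.ofReal ((1 - ‖w‖ ^ 2) ^ t * ‖1 - (‖z‖ : ℂ) * star w‖ ^ (-(2 + s))) := by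
  set u : Circle := Circle.exp (Complex.arg z) with hu
  have hmp := (rotation u).measurePreserving
  have h := hmp.setLIntegral_comp_preimage_emb
    (rotation u).toHomeomorph.measurableEmbedding
    (fun w => ENNReal.ofReal ((1 - ‖w‖ ^ 2) ^ t * ‖1 - z * star w‖ ^ (-(2 + s))))
    (Metric.ball 0 1)
  rw [← h]
  have hpre : (rotation u) ⁻¹' Metric.ball (0 : ℂ) 1 = Metric.ball 0 1 := by
    ext w; simp only [Set.mem_preimage, mem_ball_zero_iff, LinearIsometryEquiv.norm_map]
  rw [hpre]
  apply lintegral_congr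
  intro w
  have hnu : ‖(u : ℂ)‖ = 1 := Circle.norm_coe u
  have huu : (u : ℂ) * star (u : ℂ) = 1 := by
    have := Complex.mul_conj (u : ℂ)
    simpa [Complex.normSq_eq_norm_sq, hnu] using this
  have hz : z = (‖z‖ : ℂ) * (u : ℂ) := by
    rw [hu, Circle.coe_exp, Complex.norm_mul_exp_arg_mul_I]
  have h1 : z * star ((rotation u) w) = (‖z‖ : ℂ) * star w := by
    rw [rotation_apply, star_mul]
    conv_lhs => rw [hz]
    linear_combination (‖z‖ : ℂ) * star w * huu
  rw [h1, LinearIsometryEquiv.norm_map]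

/-- The Forelli–Rudin estimate: in polar coordinates, the angular integral is at most a constant
times `(1 - |z| r)^(-(1+s))`, and `lintegral_radius` handles the remaining radial integral. -/
lemma forelli_rudin {t s : ℝ} (ht : -1 < t) (hts : t < s) : ∃ C : ℝ, 0 < C ∧
    ∀ z : ℂ, ‖z‖ < 1 → ∫⁻ w in Metric.ball (0 : ℂ) 1,
      ENNReal.ofReal ((1 - ‖w‖ ^ 2) ^ t * ‖1 - z * star w‖ ^ (-(2 + s)))
      ≤ ENNReal.ofReal (C * (1 - ‖z‖ ^ 2) ^ (t - s)) := by
  have hpi := Real.pi_pos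
  have hs1 : 0 < 1 + s := by linarith
  set C1 : ℝ := 2 ^ (2 + s) * (2 * Real.pi / (1 + s)) with hC1
  set C2 : ℝ := 2 ^ |t| * (1 / (t + 1) + 1 / (s - t)) with hC2
  have hC1p : 0 < C1 := by positivity
  have hC2p : 0 < C2 := by
    have : 0 < t + 1 := by linarith
    have : 0 < s - t := by linarith
    positivity
  refine ⟨C1 * C2 * 2 ^ (s - t), by positivity, fun z hz => ?_⟩
  rw [lintegral_rotate]
  set ρ := ‖z‖ with hρ
  have hρ0 : 0 ≤ ρ := norm_nonneg z
  set G : ℂ → ℝ≥0∞ := fun w =>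
    ENNReal.ofReal ((1 - ‖w‖ ^ 2) ^ t * ‖1 - (ρ : ℂ) * star w‖ ^ (-(2 + s))) with hG
  set H : ℝ × ℝ → ℝ≥0∞ := fun q => ENNReal.ofReal (2 ^ (2 + s)) *
    (ENNReal.ofReal (q.1 * (1 - q.1 ^ 2) ^ t) *
      ENNReal.ofReal (((1 - ρ * q.1) + |q.2| / Real.pi) ^ (-(2 + s)))) with hH
  have hHm : Measurable H := by rw [hH]; fun_prop
  have step1 : ∫⁻ w in Metric.ball (0 : ℂ) 1, G w
      ≤ ∫⁻ q in Set.Ioo (0 : ℝ) 1 ×ˢ Set.Ioo (-Real.pi) Real.pi, H q := by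
    rw [← lintegral_indicator Metric.isOpen_ball.measurableSet,
      ← Complex.lintegral_comp_polarCoord_symm,
      ← lintegral_indicator (measurableSet_Ioo.prod measurableSet_Ioo)]
    refine le_trans ?_ (setLIntegral_le_lintegral polarCoord.target _)
    apply setLIntegral_mono' polarCoord.open_target.measurableSet
    rintro ⟨r, θ⟩ hq
    rw [polarCoord_target] at hq
    obtain ⟨hr0, hθ⟩ := hq
    simp only [Set.mem_Ioi] at hr0
    simp only [Set.mem_Ioo] at hθ
    have hn : ‖Complex.polarCoord.symm (r, θ)‖ = r := by
      rw [Complex.norm_polarCoord_symm, abs_of_pos hr0]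
    by_cases hr1 : r < 1
    · rw [Set.indicator_of_mem (by rwa [mem_ball_zero_iff, hn]), Set.indicator_of_mem (by
        exact ⟨⟨hr0, hr1⟩, hθ⟩)]
      simp only [hG, hH, hn]
      have hρr : ρ * r < 1 := by nlinarith
      have hρr0 : 0 ≤ ρ * r := by positivity
      have e1 : (ρ : ℂ) * star (Complex.polarCoord.symm (r, θ))
          = ((ρ * r : ℝ) : ℂ) * Complex.exp ((-θ : ℝ) * Complex.I) := by
        rw [Complex.polarCoord_symm_apply, Complex.exp_mul_I]
        apply Complex.ext <;> simp [← Complex.ofReal_cos, ← Complex.ofReal_sin] <;> ring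
      rw [e1]
      have hlow := norm_kernel_lower (ρ := ρ * r) (θ := -θ) hρr0 hρr
        (by rw [abs_neg]; exact abs_le.2 ⟨hθ.1.le, hθ.2.le⟩)
      rw [abs_neg] at hlow
      have hpos : 0 < (1 - ρ * r) + |θ| / Real.pi := by
        have : 0 < 1 - ρ * r := by linarith
        positivity
      have e2 := Real.rpow_le_rpow_of_nonpos (by linarith) hlow
        (show -(2 + s) ≤ 0 by linarith)
      rw [Real.div_rpow hpos.le (by norm_num), Real.rpow_neg (by norm_num : (0 : ℝ) ≤ 2),
        div_inv_eq_mul] at e2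
      have e3 : 0 ≤ (1 - r ^ 2) ^ t := Real.rpow_nonneg (by nlinarith) _
      rw [smul_eq_mul, ← ENNReal.ofReal_mul hr0.le, ← ENNReal.ofReal_mul (by positivity),
        ← ENNReal.ofReal_mul (by positivity)]
      apply ENNReal.ofReal_le_ofReal
      calc _ ≤ r * ((1 - r ^ 2) ^ t * ((1 - ρ * r + |θ| / Real.pi) ^ (-(2 + s)) * 2 ^ (2 + s))) := by
            gcongr
        _ = _ := by ring
    · rw [Set.indicator_of_notMem (by rwa [mem_ball_zero_iff, hn])]
      simp
  have step2 : ∫⁻ q in Set.Ioo (0 : ℝ) 1 ×ˢ Set.Ioo (-Real.pi) Real.pi, H q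
      ≤ ENNReal.ofReal C1 * ∫⁻ r in Set.Ioo (0 : ℝ) 1,
        ENNReal.ofReal (r * (1 - r ^ 2) ^ t * (1 - ρ * r) ^ (-(1 + s))) := by
    rw [Measure.volume_eq_prod, ← Measure.prod_restrict, lintegral_prod _ hHm.aemeasurable,
      ← lintegral_const_mul' _ _ ENNReal.ofReal_ne_top]
    apply setLIntegral_mono' measurableSet_Ioo
    intro r hr
    have hρr : 0 < 1 - ρ * r := by nlinarith [hr.1, hr.2]
    have e3 : 0 ≤ (1 - r ^ 2) ^ t := Real.rpow_nonneg (by nlinarith [hr.1, hr.2]) _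
    have hr0 := hr.1
    simp only [hH]
    rw [lintegral_const_mul' _ _ ENNReal.ofReal_ne_top,
      lintegral_const_mul' _ _ ENNReal.ofReal_ne_top]
    calc _ ≤ ENNReal.ofReal (2 ^ (2 + s)) * (ENNReal.ofReal (r * (1 - r ^ 2) ^ t) *
          ENNReal.ofReal (2 * Real.pi / (2 + s - 1) * (1 - ρ * r) ^ (1 - (2 + s)))) := by
          gcongr
          exact lintegral_angle hρr (by linarith)
      _ = _ := by
          rw [← ENNReal.ofReal_mul (by positivity), ← ENNReal.ofReal_mul (by positivity),
            ← ENNReal.ofReal_mul (by positivity), hC1, show 1 - (2 + s) = -(1 + s) by ring,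
            show 2 + s - 1 = 1 + s by ring]
          congr 1
          ring
  refine step1.trans (step2.trans ?_)
  refine (mul_le_mul_right (lintegral_radius ht hts hρ0 hz) _).trans ?_
  rw [← ENNReal.ofReal_mul hC1p.le]
  apply ENNReal.ofReal_le_ofReal
  have h1ρ : 0 < 1 - ρ := by linarith
  have hsq : 0 < 1 - ρ ^ 2 := by nlinarith
  have e5 : (1 - ρ) ^ (t - s) ≤ 2 ^ (s - t) * (1 - ρ ^ 2) ^ (t - s) := by
    have := Real.rpow_le_rpow_of_nonpos (x := (1 - ρ ^ 2) / 2) (y := 1 - ρ) (z := t - s)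
      (by positivity) (by nlinarith) (by linarith)
    rw [Real.div_rpow hsq.le (by norm_num), div_eq_mul_inv, ← Real.rpow_neg (by norm_num),
      neg_sub] at this
    linarith
  calc _ = C1 * C2 * (1 - ρ) ^ (t - s) := by rw [hC2]; ring
    _ ≤ C1 * C2 * (2 ^ (s - t) * (1 - ρ ^ 2) ^ (t - s)) := by gcongr
    _ = _ := by ring

/-! ### The Schur test -/

/-- The Schur test: if `h` is a common test function for the kernel `k` and its transpose, with
exponents `q` and `p`, then `k` is bounded on `L^p`. Hölder is applied to the factorisation
`k f = (k^(1/q) h) (k^(1/p) h⁻¹ f)`, followed by Tonelli. -/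
lemma schur_test {X : Type*} [MeasurableSpace X] (μ : Measure X) [SFinite μ]
    (k : X → X → ℝ≥0∞) (hk : Measurable (Function.uncurry k))
    (h : X → ℝ≥0∞) (hh : Measurable h)
    (h0 : ∀ᵐ x ∂μ, h x ≠ 0) (hT : ∀ᵐ x ∂μ, h x ≠ ⊤)
    {p q : ℝ} (hpq : p.HolderConjugate q) (A B : ℝ≥0∞)
    (hA : ∀ᵐ x ∂μ, ∫⁻ y, k x y * h y ^ q ∂μ ≤ A * h x ^ q)
    (hB : ∀ᵐ y ∂μ, ∫⁻ x, k x y * h x ^ p ∂μ ≤ B * h y ^ p)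
    (f : X → ℝ≥0∞) (hf : Measurable f) :
    ∫⁻ x, (∫⁻ y, k x y * f y ∂μ) ^ p ∂μ ≤ A ^ (p / q) * B * ∫⁻ y, f y ^ p ∂μ := by
  have hp0 : 0 < p := hpq.pos
  have hq0 : 0 < q := hpq.symm.pos
  have hkx : ∀ x, Measurable (k x) := fun x => hk.comp measurable_prodMk_left
  have step1 : ∀ᵐ x ∂μ, (∫⁻ y, k x y * f y ∂μ) ^ p ≤
      A ^ (p / q) * ∫⁻ y, h x ^ p * (k x y * ((h y)⁻¹ ^ p * f y ^ p)) ∂μ := by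
    filter_upwards [hA] with x hx
    have e1 : ∫⁻ y, k x y * f y ∂μ = ∫⁻ y, ((fun y => k x y ^ (1 / q) * h y) *
        (fun y => k x y ^ (1 / p) * ((h y)⁻¹ * f y))) y ∂μ := by
      apply lintegral_congr_ae
      filter_upwards [h0, hT] with y hy0 hyT
      have : k x y ^ (1 / q) * k x y ^ (1 / p) = k x y := by
        rw [← ENNReal.rpow_add_of_nonneg _ _ (by positivity) (by positivity)]
        have := hpq.symm.inv_add_inv_eq_one
        rw [one_div, one_div, this, ENNReal.rpow_one]
      simp only [Pi.mul_apply]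
      calc k x y * f y = (k x y ^ (1 / q) * k x y ^ (1 / p)) * f y * (h y * (h y)⁻¹) := by
            rw [this, ENNReal.mul_inv_cancel hy0 hyT, mul_one]
        _ = _ := by ring
    rw [e1]
    have e2 := ENNReal.lintegral_mul_le_Lp_mul_Lq μ hpq.symm
      (f := fun y => k x y ^ (1 / q) * h y) (g := fun y => k x y ^ (1 / p) * ((h y)⁻¹ * f y))
      (((hkx x).pow_const _).mul hh).aemeasurable
      (((hkx x).pow_const _).mul (hh.inv.mul hf)).aemeasurable
    have e3 : ∀ y, (k x y ^ (1 / q) * h y) ^ q = k x y * h y ^ q := fun y => by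
      rw [ENNReal.mul_rpow_of_nonneg _ _ hq0.le, ← ENNReal.rpow_mul, one_div_mul_cancel hq0.ne',
        ENNReal.rpow_one]
    have e4 : ∀ y, (k x y ^ (1 / p) * ((h y)⁻¹ * f y)) ^ p
        = k x y * ((h y)⁻¹ ^ p * f y ^ p) := fun y => by
      rw [ENNReal.mul_rpow_of_nonneg _ _ hp0.le, ← ENNReal.rpow_mul, one_div_mul_cancel hp0.ne',
        ENNReal.rpow_one, ENNReal.mul_rpow_of_nonneg _ _ hp0.le]
    simp only [e3, e4] at e2
    calc _ ≤ ((∫⁻ y, k x y * h y ^ q ∂μ) ^ (1 / q) *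
          (∫⁻ y, k x y * ((h y)⁻¹ ^ p * f y ^ p) ∂μ) ^ (1 / p)) ^ p := by gcongr
      _ ≤ ((A * h x ^ q) ^ (1 / q) *
          (∫⁻ y, k x y * ((h y)⁻¹ ^ p * f y ^ p) ∂μ) ^ (1 / p)) ^ p := by gcongr
      _ = A ^ (p / q) * (h x ^ p * ∫⁻ y, k x y * ((h y)⁻¹ ^ p * f y ^ p) ∂μ) := by
          rw [ENNReal.mul_rpow_of_nonneg _ _ hp0.le, ← ENNReal.rpow_mul, ← ENNReal.rpow_mul,
            one_div_mul_cancel hp0.ne', ENNReal.rpow_one,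
            ENNReal.mul_rpow_of_nonneg _ _ (by positivity), ← ENNReal.rpow_mul,
            show q * (1 / q * p) = p by field_simp, show 1 / q * p = p / q by ring, mul_assoc]
      _ = _ := by
          rw [lintegral_const_mul]
          exact (hkx x).mul ((hh.inv.pow_const _).mul (hf.pow_const _))
  have hm : Measurable (Function.uncurry
      fun x y => h x ^ p * (k x y * ((h y)⁻¹ ^ p * f y ^ p))) := by
    have h1 : Measurable fun v : X × X => h v.1 := hh.comp measurable_fst
    have h2 : Measurable fun v : X × X => h v.2 := hh.comp measurable_snd
    have h3 : Measurable fun v : X × X => f v.2 := hf.comp measurable_snd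
    exact (h1.pow_const _).mul (hk.mul ((h2.inv.pow_const _).mul (h3.pow_const _)))
  have hky : ∀ y, Measurable fun x => k x y := fun y => hk.comp measurable_prodMk_right
  calc _ ≤ ∫⁻ x, A ^ (p / q) * ∫⁻ y, h x ^ p * (k x y * ((h y)⁻¹ ^ p * f y ^ p)) ∂μ ∂μ :=
        lintegral_mono_ae step1
    _ = A ^ (p / q) * ∫⁻ y, ∫⁻ x, h x ^ p * (k x y * ((h y)⁻¹ ^ p * f y ^ p)) ∂μ ∂μ := by
        rw [lintegral_const_mul _ hm.lintegral_prod_right, lintegral_lintegral_swap hm.aemeasurable]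
    _ ≤ A ^ (p / q) * ∫⁻ y, B * f y ^ p ∂μ := by
        refine mul_le_mul_right (lintegral_mono_ae ?_) _
        filter_upwards [hB, h0, hT] with y hy hy0 hyT
        calc _ = ∫⁻ x, (k x y * h x ^ p) * ((h y)⁻¹ ^ p * f y ^ p) ∂μ := by
              congr 1; ext x; ring
          _ = (∫⁻ x, k x y * h x ^ p ∂μ) * ((h y)⁻¹ ^ p * f y ^ p) := by
              rw [lintegral_mul_const]
              exact (hky y).mul (hh.pow_const _)
          _ ≤ (B * h y ^ p) * ((h y)⁻¹ ^ p * f y ^ p) := by gcongr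
          _ = B * (h y * (h y)⁻¹) ^ p * f y ^ p := by
              rw [ENNReal.mul_rpow_of_nonneg _ _ hp0.le]; ring
          _ = _ := by rw [ENNReal.mul_inv_cancel hy0 hyT, ENNReal.one_rpow, mul_one]
    _ = _ := by
        rw [lintegral_const_mul _ (hf.pow_const _), mul_assoc]

/-! ### The kernel operators -/

lemma ae_mem_disc (α : ℝ) : ∀ᵐ w ∂(bergmanMeasure α), ‖w‖ < 1 := by
  have h1 : ∀ᵐ w ∂(volume.restrict (Metric.ball (0 : ℂ) 1)), ‖w‖ < 1 := by
    filter_upwards [ae_restrict_mem Metric.isOpen_ball.measurableSet] with w hw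
    simpa using hw
  exact (withDensity_absolutelyContinuous _ _).ae_le h1

lemma lintegral_bergman (α : ℝ) (g : ℂ → ℝ≥0∞) (hg : Measurable g) :
    ∫⁻ w, g w ∂(bergmanMeasure α) =
      ∫⁻ w in Metric.ball (0 : ℂ) 1, ENNReal.ofReal ((1 - ‖w‖ ^ 2) ^ α) * g w := by
  rw [bergmanMeasure, lintegral_withDensity_eq_lintegral_mul _ (by fun_prop) hg]
  rfl

lemma isFiniteMeasure_bergman {α : ℝ} (hα : -1 < α) : IsFiniteMeasure (bergmanMeasure α) := by
  obtain ⟨C, hC, h⟩ := forelli_rudin hα (lt_add_one α)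
  have h0 := h 0 (by simp)
  refine ⟨?_⟩
  rw [← lintegral_one, lintegral_bergman _ _ measurable_const]
  refine lt_of_le_of_lt ?_ (lt_of_le_of_lt h0 ENNReal.ofReal_lt_top)
  simp

/-- The modulus of the Bergman kernel, up to its normalising constant. -/
noncomputable def absKernel (α : ℝ) (z w : ℂ) : ℝ≥0∞ :=
  ENNReal.ofReal (‖1 - z * star w‖ ^ (-(2 + α)))

lemma absKernel_symm (α : ℝ) (z w : ℂ) : absKernel α z w = absKernel α w z := by
  unfold absKernel
  rw [← norm_star (1 - z * star w)]
  simp [mul_comm]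

lemma measurable_absKernel (α : ℝ) : Measurable (Function.uncurry (absKernel α)) := by
  unfold absKernel Function.uncurry
  have : Continuous fun v : ℂ × ℂ => ‖1 - v.1 * star v.2‖ := by fun_prop
  exact (this.measurable.pow_const _).ennreal_ofReal

/-- The Forelli–Rudin estimate with `t = α - τ` and `s = α`. -/
lemma absKernel_test {α τ : ℝ} (h0 : 0 < τ) (h1 : τ < α + 1) : ∃ A : ℝ, ∀ z : ℂ, ‖z‖ < 1 →
    ∫⁻ w, absKernel α z w * ENNReal.ofReal ((1 - ‖w‖ ^ 2) ^ (-τ)) ∂(bergmanMeasure α)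
      ≤ ENNReal.ofReal A * ENNReal.ofReal ((1 - ‖z‖ ^ 2) ^ (-τ)) := by
  obtain ⟨C, hC, h⟩ := forelli_rudin (t := α - τ) (s := α) (by linarith) (by linarith)
  refine ⟨C, fun z hz => ?_⟩
  have hm : Measurable fun w : ℂ => absKernel α z w * ENNReal.ofReal ((1 - ‖w‖ ^ 2) ^ (-τ)) :=
    ((measurable_absKernel α).comp measurable_prodMk_left).mul (by fun_prop)
  rw [lintegral_bergman _ _ hm, ← ENNReal.ofReal_mul hC.le]
  have := h z hz
  rw [show α - τ - α = -τ by ring] at this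
  refine le_trans (le_of_eq ?_) this
  apply setLIntegral_congr_fun Metric.isOpen_ball.measurableSet
  intro w hw
  have hw1 : ‖w‖ < 1 := by simpa using hw
  have hp : 0 < 1 - ‖w‖ ^ 2 := by nlinarith [norm_nonneg w]
  simp only [absKernel]
  rw [← ENNReal.ofReal_mul (by positivity), ← ENNReal.ofReal_mul (by positivity),
    sub_eq_add_neg α τ, Real.rpow_add hp]
  congr 1
  ring

/-- The integral operator with kernel `|1 - z w̄|^(-(2+α))` is bounded on `L^p`. -/
lemma absKernel_bounded {α : ℝ} (hα : -1 < α) {p : ℝ} (hp : 1 < p) : ∃ A : ℝ≥0∞, A ≠ ⊤ ∧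
    ∀ f : ℂ → ℝ≥0∞, Measurable f →
    ∫⁻ z, (∫⁻ w, absKernel α z w * f w ∂(bergmanMeasure α)) ^ p ∂(bergmanMeasure α)
      ≤ A * ∫⁻ w, f w ^ p ∂(bergmanMeasure α) := by
  have := isFiniteMeasure_bergman hα
  have hpq : p.HolderConjugate (Real.conjExponent p) := .conjExponent hp
  set q := Real.conjExponent p
  have hp0 : 0 < p := hpq.pos
  have hq0 : 0 < q := hpq.symm.pos
  have hq1 : 1 < q := hpq.symm.lt
  have hα1 : 0 < α + 1 := by linarith
  obtain ⟨A, hA⟩ := absKernel_test (α := α) (τ := (α + 1) / p) (by positivity)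
    (div_lt_self hα1 hp)
  obtain ⟨B, hB⟩ := absKernel_test (α := α) (τ := (α + 1) / q) (by positivity)
    (div_lt_self hα1 hq1)
  set h : ℂ → ℝ≥0∞ := fun z => ENNReal.ofReal ((1 - ‖z‖ ^ 2) ^ (-((α + 1) / (p * q)))) with hh
  have hpow : ∀ z : ℂ, ‖z‖ < 1 → 0 < (1 - ‖z‖ ^ 2) := fun z hz => by
    nlinarith [norm_nonneg z]
  have hhq : ∀ z : ℂ, ‖z‖ < 1 →
      h z ^ q = ENNReal.ofReal ((1 - ‖z‖ ^ 2) ^ (-((α + 1) / p))) := fun z hz => by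
    have := hpow z hz
    rw [hh, ENNReal.ofReal_rpow_of_pos (by positivity), ← Real.rpow_mul this.le]
    congr 2
    field_simp
  have hhp : ∀ z : ℂ, ‖z‖ < 1 →
      h z ^ p = ENNReal.ofReal ((1 - ‖z‖ ^ 2) ^ (-((α + 1) / q))) := fun z hz => by
    have := hpow z hz
    rw [hh, ENNReal.ofReal_rpow_of_pos (by positivity), ← Real.rpow_mul this.le]
    congr 2
    field_simp
  refine ⟨ENNReal.ofReal A ^ (p / q) * ENNReal.ofReal B, ?_, fun f hf => ?_⟩
  · exact ENNReal.mul_ne_top (ENNReal.rpow_ne_top_of_nonneg (by positivity) ENNReal.ofReal_ne_top)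
      ENNReal.ofReal_ne_top
  · apply schur_test (bergmanMeasure α) (absKernel α) (measurable_absKernel α) h
      (by rw [hh]; fun_prop) _ (ae_of_all _ fun _ => ENNReal.ofReal_ne_top) hpq _ _ _ _ f hf
    · filter_upwards [ae_mem_disc α] with z hz
      have := hpow z hz
      simp only [hh, ne_eq, ENNReal.ofReal_eq_zero, not_le]
      positivity
    · filter_upwards [ae_mem_disc α] with z hz
      rw [hhq z hz]
      refine le_trans (le_of_eq (lintegral_congr_ae ?_)) (hA z hz)
      filter_upwards [ae_mem_disc α] with w hw
      rw [hhq w hw]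
    · filter_upwards [ae_mem_disc α] with z hz
      rw [hhp z hz]
      refine le_trans (le_of_eq (lintegral_congr_ae ?_)) (hB z hz)
      filter_upwards [ae_mem_disc α] with w hw
      rw [hhp w hw, absKernel_symm]

/-- The reproducing kernel `(1 - z w̄)^(-(2+α))`, up to its normalising constant. -/
noncomputable def bergmanKernel (α : ℝ) (z w : ℂ) : ℂ :=
  1 / (1 - z * star w) ^ ((2 + α : ℝ) : ℂ)

lemma norm_bergmanKernel (α : ℝ) (z w : ℂ) :
    ‖bergmanKernel α z w‖ = ‖1 - z * star w‖ ^ (-(2 + α)) := by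
  rw [bergmanKernel, norm_div, norm_one, Complex.norm_cpow_real, Real.rpow_neg (norm_nonneg _),
    one_div]

lemma measurable_bergmanKernel (α : ℝ) (z : ℂ) : Measurable (bergmanKernel α z) := by
  unfold bergmanKernel
  have : Continuous fun w : ℂ => 1 - z * star w := by fun_prop
  exact (this.measurable.pow_const _).const_div _

lemma memLp_bergmanKernel {α : ℝ} (hα : -1 < α) {z : ℂ} (hz : ‖z‖ < 1) :
    MemLp (fun w => star (bergmanKernel α z w)) 2 (bergmanMeasure α) := by
  have := isFiniteMeasure_bergman hα
  apply MemLp.of_bound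
    (continuous_star.measurable.comp (measurable_bergmanKernel α z)).aestronglyMeasurable
    ((1 - ‖z‖) ^ (-(2 + α)))
  filter_upwards [ae_mem_disc α] with w hw
  rw [Function.comp_apply, norm_star, norm_bergmanKernel]
  apply Real.rpow_le_rpow_of_nonpos (by linarith) _ (by linarith)
  have h1 := norm_sub_norm_le (1 : ℂ) (z * star w)
  rw [norm_one, norm_mul, norm_star] at h1
  nlinarith [norm_nonneg z, norm_nonneg w]

/-- Integration against the kernel, expanded in powers of `z`. -/
lemma hasSum_kernel {α : ℝ} (hα : -1 < α) : ∃ a : ℕ → ℂ,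
    (∀ n, a n * radialMoment α n = radialMoment α 0) ∧
    ∀ z : ℂ, ‖z‖ < 1 → ∀ u : ℂ → ℂ, Integrable u (bergmanMeasure α) →
      HasSum (fun n => a n * z ^ n * ∫ w, star w ^ n * u w ∂(bergmanMeasure α))
        (∫ w, bergmanKernel α z w * u w ∂(bergmanMeasure α)) := by
  obtain ⟨a, ha0, hrec, hsum⟩ := kernel_series (2 + α)
  refine ⟨a, fun n => ?_, fun z hz u hu => ?_⟩
  · induction n with
    | zero => simp [ha0]
    | succ n ih =>
      have h1 := hrec n
      have h2 : ((n : ℂ) + 1) * radialMoment α n = (n + α + 2) * radialMoment α (n + 1) := by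
        exact_mod_cast radialMoment_succ hα n
      have h3 : ((n : ℂ) + 1) ≠ 0 := by exact_mod_cast n.succ_ne_zero
      rw [← ih]
      apply mul_left_cancel₀ h3
      push_cast at h1
      linear_combination (radialMoment α (n + 1) : ℂ) * h1 - a n * h2
  · have hs := (hsum z hz).1
    have key := hasSum_integral_of_dominated_convergence (μ := bergmanMeasure α)
      (F := fun n w => a n * z ^ n * (star w ^ n * u w))
      (f := fun w => bergmanKernel α z w * u w)
      (fun n w => ‖a n * z ^ n‖ * ‖u w‖) ?_ ?_ ?_ ?_ ?_
    · simpa only [integral_const_mul] using key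
    · intro n
      have : Continuous fun w : ℂ => star w ^ n := by fun_prop
      exact (this.aestronglyMeasurable.mul hu.1).const_mul _
    · intro n
      filter_upwards [ae_mem_disc α] with w hw
      rw [norm_mul, norm_mul (star w ^ n), norm_pow, norm_star]
      gcongr
      exact mul_le_of_le_one_left (norm_nonneg _) (pow_le_one₀ (norm_nonneg _) hw.le)
    · exact ae_of_all _ fun w => hs.mul_right _
    · simp only [tsum_mul_right]
      exact hu.norm.const_mul _
    · filter_upwards [ae_mem_disc α] with w hw
      have hx : ‖z * star w‖ < 1 := by
        rw [norm_mul, norm_star]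
        nlinarith [norm_nonneg z, norm_nonneg w]
      have := ((hsum _ hx).2).mul_right (u w)
      convert! this using 2 with n
      · rw [mul_pow]; ring

lemma memLp_polynomial {α : ℝ} (hα : -1 < α) (q : Polynomial ℂ) (r : ℝ≥0∞) :
    MemLp (fun w => q.eval w) r (bergmanMeasure α) := by
  have := isFiniteMeasure_bergman hα
  obtain ⟨M, hM⟩ := (isCompact_closedBall (0 : ℂ) 1).exists_bound_of_continuousOn
    q.continuous.continuousOn
  apply MemLp.of_bound q.continuous.aestronglyMeasurable M
  filter_upwards [ae_mem_disc α] with w hw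
  exact hM w (by simpa using hw.le)

lemma kernel_reproduces {α : ℝ} (hα : -1 < α) {z : ℂ} (hz : ‖z‖ < 1) (q : Polynomial ℂ) :
    ∫ w, bergmanKernel α z w * q.eval w ∂(bergmanMeasure α)
      = ((2 * Real.pi * radialMoment α 0 : ℝ) : ℂ) * q.eval z := by
  obtain ⟨a, ha, hsum⟩ := hasSum_kernel hα
  have hInt : ∀ q : Polynomial ℂ, Integrable (fun w => q.eval w) (bergmanMeasure α) :=
    fun q => memLp_one_iff_integrable.1 (memLp_polynomial hα q 1)
  have hInt' : ∀ q : Polynomial ℂ,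
      Integrable (fun w => bergmanKernel α z w * q.eval w) (bergmanMeasure α) := fun q => by
    have := (memLp_bergmanKernel hα hz).star.integrable_mul (memLp_polynomial hα q 2)
    refine this.congr (ae_of_all _ fun w => ?_)
    simp
  induction q using Polynomial.induction_on' with
  | add q₁ q₂ h₁ h₂ =>
    simp only [Polynomial.eval_add, mul_add]
    rw [integral_add (hInt' q₁) (hInt' q₂), h₁, h₂]
  | monomial m c =>
    have h1 := hsum z hz (fun w => (Polynomial.monomial m c).eval w) (hInt _)
    refine h1.unique ?_
    have h2 : ∀ n, ∫ w, star w ^ n * (Polynomial.monomial m c).eval w ∂(bergmanMeasure α)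
        = c * if n = m then ((2 * Real.pi * radialMoment α n : ℝ) : ℂ) else 0 := by
      intro n
      rw [← integral_monomials, ← integral_const_mul]
      congr 1
      ext w
      rw [Polynomial.eval_monomial]
      ring
    simp only [h2]
    have h3 := hasSum_single (f := fun n => a n * z ^ n *
      (c * if n = m then ((2 * Real.pi * radialMoment α n : ℝ) : ℂ) else 0)) m
      (fun n hn => by simp [hn])
    convert h3 using 1
    rw [if_pos rfl, Polynomial.eval_monomial]
    have := ha m
    push_cast
    linear_combination -(2 * Real.pi * c * z ^ m : ℂ) * this

/-! ### The projection as an integral operator -/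

/-- Integration against the kernel at `z` is a continuous functional on `L²`. -/
lemma kernel_eq_inner {α : ℝ} (hα : -1 < α) {z : ℂ} (hz : ‖z‖ < 1)
    (g : Lp ℂ 2 (bergmanMeasure α)) :
    ∫ w, bergmanKernel α z w * g w ∂(bergmanMeasure α)
      = inner ℂ ((memLp_bergmanKernel hα hz).toLp _) g := by
  rw [L2.inner_def]
  apply integral_congr_ae
  filter_upwards [(memLp_bergmanKernel hα hz).coeFn_toLp] with w hw
  rw [hw, RCLike.inner_apply]
  simp [mul_comm]

lemma exists_polynomial_of_mem_span {ν : Measure ℂ} {g : Lp ℂ 2 ν}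
    (hg : g ∈ Submodule.span ℂ {g : Lp ℂ 2 ν |
      ∃ q : Polynomial ℂ, ⇑g =ᵐ[ν] fun z => q.eval z}) :
    ∃ q : Polynomial ℂ, ⇑g =ᵐ[ν] fun z => q.eval z := by
  induction hg using Submodule.span_induction with
  | mem x hx => exact hx
  | zero =>
    refine ⟨0, ?_⟩
    filter_upwards [Lp.coeFn_zero ℂ 2 ν] with w hw
    rw [hw]; simp
  | add x y _ _ hx hy =>
    obtain ⟨q₁, h₁⟩ := hx
    obtain ⟨q₂, h₂⟩ := hy
    refine ⟨q₁ + q₂, ?_⟩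
    filter_upwards [Lp.coeFn_add x y, h₁, h₂] with w hw hw₁ hw₂
    rw [hw, Pi.add_apply, hw₁, hw₂, Polynomial.eval_add]
  | smul c x _ hx =>
    obtain ⟨q, h⟩ := hx
    refine ⟨Polynomial.C c * q, ?_⟩
    filter_upwards [Lp.coeFn_smul c x, h] with w hw hw₁
    rw [hw, Pi.smul_apply, hw₁, smul_eq_mul, Polynomial.eval_mul, Polynomial.eval_C]

/-- The reproducing formula survives passage to the `L²` closure of the polynomials: along a
subsequence both sides converge, the left by continuity of the functional and the right almost
everywhere. -/
lemma kernel_reproduces_closure {α : ℝ} (hα : -1 < α) {g : Lp ℂ 2 (bergmanMeasure α)}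
    (hg : g ∈ (Submodule.span ℂ {g : Lp ℂ 2 (bergmanMeasure α) |
      ∃ q : Polynomial ℂ, ⇑g =ᵐ[bergmanMeasure α] fun z => q.eval z}).topologicalClosure) :
    ∀ᵐ z ∂(bergmanMeasure α), ∫ w, bergmanKernel α z w * g w ∂(bergmanMeasure α)
      = ((2 * Real.pi * radialMoment α 0 : ℝ) : ℂ) * g z := by
  rw [← SetLike.mem_coe, Submodule.topologicalClosure_coe, mem_closure_iff_seq_limit] at hg
  obtain ⟨x, hxmem, hx⟩ := hg
  choose q hq using fun n => exists_polynomial_of_mem_span (hxmem n)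
  obtain ⟨ns, hns, hae⟩ := (tendstoInMeasure_of_tendsto_Lp hx).exists_seq_tendsto_ae
  filter_upwards [ae_mem_disc α, hae, ae_all_iff.2 hq] with z hz hlim hqz
  have hT : ∀ n, ∫ w, bergmanKernel α z w * x n w ∂(bergmanMeasure α)
      = ((2 * Real.pi * radialMoment α 0 : ℝ) : ℂ) * x n z := by
    intro n
    rw [hqz n, ← kernel_reproduces hα hz]
    apply integral_congr_ae
    filter_upwards [hq n] with w hw
    rw [hw]
  have l1 : Filter.Tendsto
      (fun k => ∫ w, bergmanKernel α z w * x (ns k) w ∂(bergmanMeasure α)) Filter.atTop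
      (nhds (∫ w, bergmanKernel α z w * g w ∂(bergmanMeasure α))) := by
    simp only [kernel_eq_inner hα hz]
    exact tendsto_const_nhds.inner (hx.comp hns.tendsto_atTop)
  simp only [hT] at l1
  exact tendsto_nhds_unique l1 (hlim.const_mul _)

/-- The kernel does not see functions orthogonal to all polynomials. -/
lemma kernel_orthogonal {α : ℝ} (hα : -1 < α) {u : Lp ℂ 2 (bergmanMeasure α)}
    (hu : u ∈ (Submodule.span ℂ {g : Lp ℂ 2 (bergmanMeasure α) |
      ∃ q : Polynomial ℂ, ⇑g =ᵐ[bergmanMeasure α] fun z => q.eval z}).topologicalClosureᗮ)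
    {z : ℂ} (hz : ‖z‖ < 1) :
    ∫ w, bergmanKernel α z w * u w ∂(bergmanMeasure α) = 0 := by
  have := isFiniteMeasure_bergman hα
  obtain ⟨a, -, hsum⟩ := hasSum_kernel hα
  have h1 := hsum z hz u ((Lp.memLp u).integrable (by norm_num))
  have h2 : ∀ n, ∫ w, star w ^ n * u w ∂(bergmanMeasure α) = 0 := by
    intro n
    have hm := memLp_polynomial hα (Polynomial.X ^ n) 2
    have hmem : hm.toLp _ ∈ (Submodule.span ℂ {g : Lp ℂ 2 (bergmanMeasure α) |
        ∃ q : Polynomial ℂ, ⇑g =ᵐ[bergmanMeasure α] fun z => q.eval z}).topologicalClosure :=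
      Submodule.le_topologicalClosure _ (Submodule.subset_span ⟨_, hm.coeFn_toLp⟩)
    rw [← Submodule.inner_right_of_mem_orthogonal hmem hu, L2.inner_def]
    apply integral_congr_ae
    filter_upwards [hm.coeFn_toLp] with w hw
    rw [hw, RCLike.inner_apply]
    simp [mul_comm]
  simp only [h2, mul_zero] at h1
  exact h1.unique hasSum_zero



/-- For `λ_α(z) = (1−|z|²)^α` with `α > −1`, the weighted Bergman projection
`P` (the orthogonal projection of `L²(𝔻, λ_α dA)` onto the closure of the polynomials)
satisfies, for every `1 < p < ∞`, a bound `∫_𝔻 |P f|^p λ_α dA ≤ C ∫_𝔻 |f|^p λ_α dA` for all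
`f ∈ L² ∩ L^p(λ_α)`. -/
theorem stmt1 (α : ℝ) (hα : -1 < α)
    (ν : Measure ℂ)
    (hν : ν = (volume.restrict (Metric.ball (0:ℂ) 1)).withDensity
      (fun z => ENNReal.ofReal ((1 - ‖z‖ ^ 2) ^ α)))
    (K : Submodule ℂ (Lp ℂ 2 ν))
    (hK : K = Submodule.span ℂ {g : Lp ℂ 2 ν |
      ∃ q : Polynomial ℂ, ⇑g =ᵐ[ν] fun z => q.eval z})
    (P : Lp ℂ 2 ν →L[ℂ] Lp ℂ 2 ν)
    (hPmem : ∀ f : Lp ℂ 2 ν, P f ∈ K.topologicalClosure)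
    (hPorth : ∀ f : Lp ℂ 2 ν, f - P f ∈ K.topologicalClosureᗮ)
    (p : ℝ) (hp : 1 < p) :
    ∃ C : ℝ, 0 < C ∧ ∀ f : Lp ℂ 2 ν,
      (∫⁻ z, (‖f z‖₊ : ℝ≥0∞) ^ p ∂ν) < ⊤ →
      (∫⁻ z, (‖(P f) z‖₊ : ℝ≥0∞) ^ p ∂ν)
        ≤ ENNReal.ofReal C * ∫⁻ z, (‖f z‖₊ : ℝ≥0∞) ^ p ∂ν := by
  change ν = bergmanMeasure α at hν
  subst hν
  subst hK
  obtain ⟨A, hA, hbound⟩ := absKernel_bounded hα hp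
  set γ : ℝ := 2 * Real.pi * radialMoment α 0 with hγ
  have hγ0 : 0 < γ := by
    have := radialMoment_zero_pos hα
    positivity
  have hp0 : 0 ≤ p := by linarith
  set B : ℝ≥0∞ := ENNReal.ofReal γ⁻¹ ^ p * A with hB
  have hBT : B ≠ ⊤ :=
    ENNReal.mul_ne_top (ENNReal.rpow_ne_top_of_nonneg hp0 ENNReal.ofReal_ne_top) hA
  refine ⟨B.toReal + 1, by positivity, fun f _ => ?_⟩
  -- `γ (P f)(z)` equals the integral of `f` against the kernel at `z`.
  have hrep : ∀ᵐ z ∂(bergmanMeasure α), ‖(P f) z‖ₑ ≤ ENNReal.ofReal γ⁻¹ *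
      ∫⁻ w, absKernel α z w * ‖f w‖ₑ ∂(bergmanMeasure α) := by
    filter_upwards [ae_mem_disc α, kernel_reproduces_closure hα (hPmem f)] with z hz hPz
    have h1 := kernel_orthogonal hα (hPorth f) hz
    rw [kernel_eq_inner hα hz, inner_sub_right, ← kernel_eq_inner hα hz,
      ← kernel_eq_inner hα hz, sub_eq_zero] at h1
    have h2 : (P f) z = (γ⁻¹ : ℝ) * ∫ w, bergmanKernel α z w * f w ∂(bergmanMeasure α) := by
      rw [h1, hPz, ← mul_assoc, ← Complex.ofReal_mul, inv_mul_cancel₀ hγ0.ne',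
        Complex.ofReal_one, one_mul]
    rw [h2, enorm_mul]
    gcongr
    · rw [← ofReal_norm, Complex.norm_real, Real.norm_of_nonneg (by positivity)]
    · refine (enorm_integral_le_lintegral_enorm _).trans (le_of_eq ?_)
      congr 1
      ext w
      rw [enorm_mul, ← ofReal_norm (bergmanKernel α z w), norm_bergmanKernel, absKernel]
  calc ∫⁻ z, ‖(P f) z‖ₑ ^ p ∂(bergmanMeasure α)
      ≤ ∫⁻ z, ENNReal.ofReal γ⁻¹ ^ p *
          (∫⁻ w, absKernel α z w * ‖f w‖ₑ ∂(bergmanMeasure α)) ^ p ∂(bergmanMeasure α) := by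
        apply lintegral_mono_ae
        filter_upwards [hrep] with z hz
        rw [← ENNReal.mul_rpow_of_nonneg _ _ hp0]
        gcongr
    _ ≤ B * ∫⁻ z, ‖f z‖ₑ ^ p ∂(bergmanMeasure α) := by
        rw [lintegral_const_mul' _ _
          (ENNReal.rpow_ne_top_of_nonneg hp0 ENNReal.ofReal_ne_top), hB, mul_assoc]
        gcongr
        exact hbound _ (Lp.stronglyMeasurable f).enorm
    _ ≤ _ := by
        refine mul_le_mul_left ?_ _
        rw [ENNReal.le_ofReal_iff_toReal_le hBT (by positivity)]
        linarith
end
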